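/- arXiv:2503.08991 — 7 statements merged into one kernel-verified Lean document; each statement's English description precedes it below -/
import Mathlib

section
/- If f : X → X is a continuum-wise expansive homeomorphism of a compact metric space (X,d), then there exists a hyperbolic cw-metric for f, i.e., a function D assigning a real number D(C_{(p,q)}) to each subcontinuum C ⊆ X and each pair of points p,q ∈ C, such that: (1a) D(C_{(p,q)}) ≥ 0, with equality if and only if C is a singleton; (1b) D(C_{(p,q)}) = D(C_{(q,p)}); (1c) D((A∪B)_{(a,c)}) ≤ D(A_{(a,b)}) + D(B_{(b,c)}) whenever A,B are subcontinua with A∪B a subcontinuum, a ∈ A, b ∈ A∩B, c ∈ B; (2) there exist λ ∈ (0,1) and ε > 0 such that if diam(f^k(C)) ≤ ε for all k ≥ 0 then D(f^n(C)_{(f^n(p),f^n(q))}) ≤ 4λ^n D(C_{(p,q)}) for all n ≥ 0, and if diam(f^{-k}(C)) ≤ ε for all k ≥ 0 then D(f^{-n}(C)_{(f^{-n}(p),f^{-n}(q))}) ≤ 4λ^n D(C_{(p,q)}) for all n ≥ 0; (3) for each δ > 0 there is γ > 0 such that diam(C) < γ implies D(C_{(p,q)}) < δ for all p,q ∈ C,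 and if D(C_{(p,q)}) < γ for some p,q ∈ C then diam(C) < δ. -/
open Metric Set

/-- A subcontinuum of `X`: a nonempty compact connected subset. -/
def IsSubcontinuum {X : Type*} [TopologicalSpace X] (C : Set X) : Prop :=
  IsCompact C ∧ IsConnected C

/-- The `c`-stable set of `x`. -/
def Ws {X : Type*} [MetricSpace X] (f : X ≃ₜ X) (c : ℝ) (x : X) : Set X :=
  {y | ∀ n : ℕ, dist (f^[n] x) (f^[n] y) ≤ c}

/-- The `c`-unstable set of `x`. -/
def Wu {X : Type*} [MetricSpace X] (f : X ≃ₜ X) (c : ℝ) (x : X) : Set X :=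
  {y | ∀ n : ℕ, dist (f.symm^[n] x) (f.symm^[n] y) ≤ c}

/-- `f` is continuum-wise expansive with cw-expansive constant `c`. -/
def IsCwExpansiveWith {X : Type*} [MetricSpace X] (f : X ≃ₜ X) (c : ℝ) : Prop :=
  0 < c ∧ ∀ x : X, IsTotallyDisconnected (Wu f c x ∩ Ws f c x)

/-! ### Frink-type chain construction -/

inductive CwChain {X : Type*} [TopologicalSpace X] (r : Set X → ℝ) :
    ℕ → Set X → X → X → ℝ → Prop
  | nil (p : X) : CwChain r 0 {p} p p 0
  | cons {n : ℕ} {A C : Set X} {p u q : X} {s : ℝ} (hA : IsSubcontinuum A) (hp : p ∈ A)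
      (hu : u ∈ A) (h : CwChain r n C u q s) : CwChain r (n + 1) (A ∪ C) p q (r A + s)

theorem isSubcontinuum_singleton {X : Type*} [TopologicalSpace X] (p : X) :
    IsSubcontinuum ({p} : Set X) := ⟨isCompact_singleton, isConnected_singleton⟩

theorem IsSubcontinuum.union {X : Type*} [TopologicalSpace X] {A B : Set X} {x : X}
    (hA : IsSubcontinuum A) (hB : IsSubcontinuum B) (h1 : x ∈ A) (h2 : x ∈ B) :
    IsSubcontinuum (A ∪ B) :=
  ⟨hA.1.union hB.1, hA.2.union ⟨x, h1, h2⟩ hB.2⟩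

namespace CwChain

variable {X : Type*} [TopologicalSpace X] {r : Set X → ℝ}

theorem spec {n : ℕ} {C : Set X} {p q : X} {s : ℝ} (h : CwChain r n C p q s) :
    IsSubcontinuum C ∧ p ∈ C ∧ q ∈ C := by
  induction h with
  | nil p => exact ⟨isSubcontinuum_singleton p, rfl, rfl⟩
  | cons hA hp hu h ih => exact ⟨hA.union ih.1 hu ih.2.1, Or.inl hp, Or.inr ih.2.2⟩

theorem nonneg (hr : ∀ A, 0 ≤ r A) {n : ℕ} {C : Set X} {p q : X} {s : ℝ}
    (h : CwChain r n C p q s) : 0 ≤ s := by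
  induction h with
  | nil p => exact le_rfl
  | cons hA hp hu h ih => exact add_nonneg (hr _) ih

theorem single {C : Set X} (hC : IsSubcontinuum C) {p q : X} (hp : p ∈ C) (hq : q ∈ C) :
    CwChain r 1 C p q (r C) := by
  have h := CwChain.cons (r := r) hC hp hq (CwChain.nil q)
  rwa [union_eq_self_of_subset_right (singleton_subset_iff.2 hq), add_zero] at h

theorem append {n m : ℕ} {A B : Set X} {a b c : X} {s t : ℝ}
    (h1 : CwChain r n A a b s) (h2 : CwChain r m B b c t) :
    CwChain r (n + m) (A ∪ B) a c (s + t) := by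
  induction h1 with
  | nil p =>
    rw [union_eq_self_of_subset_left (singleton_subset_iff.2 h2.spec.2.1), zero_add, zero_add]
    exact h2
  | cons hA hp hu h ih =>
    have := CwChain.cons hA hp hu (ih h2)
    rwa [← union_assoc, ← add_assoc, add_right_comm] at this

theorem reverse {n : ℕ} {C : Set X} {p q : X} {s : ℝ} (h : CwChain r n C p q s) :
    CwChain r n C q p s := by
  induction h with
  | nil p => exact .nil p
  | cons hA hp hu h ih =>
    have := ih.append (single hA hu hp)
    rwa [union_comm, add_comm (_ : ℝ)] at this

theorem split (hr : ∀ A, 0 ≤ r A) {n : ℕ} {C : Set X} {p q : X} {s : ℝ}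
    (h : CwChain r n C p q s) :
    0 < n → ∀ t, 0 ≤ t → t ≤ s → ∃ a b L A R u v s1 s2,
      CwChain r a L p u s1 ∧ IsSubcontinuum A ∧ u ∈ A ∧ v ∈ A ∧ CwChain r b R v q s2 ∧
      a < n ∧ b < n ∧ s1 ≤ t ∧ s2 ≤ s - t ∧ r A ≤ s ∧ C = L ∪ A ∪ R := by
  induction h with
  | nil p => intro h; omega
  | @cons n A C p u q s hA hp hu h ih =>
    intro _ t ht hts
    have hs := h.nonneg hr
    have key : (t ≤ r A ∨ n = 0) → ∃ a b L A' R u' v' s1 s2,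
      CwChain r a L p u' s1 ∧ IsSubcontinuum A' ∧ u' ∈ A' ∧ v' ∈ A' ∧ CwChain r b R v' q s2 ∧
      a < n + 1 ∧ b < n + 1 ∧ s1 ≤ t ∧ s2 ≤ r A + s - t ∧ r A' ≤ r A + s ∧
      A ∪ C = L ∪ A' ∪ R := fun hh => by
      refine ⟨0, n, {p}, A, C, p, u, 0, s, .nil p, hA, hp, hu, h, by omega, by omega, ht, ?_,
        by linarith, ?_⟩
      · rcases hh with hh | rfl
        · linarith
        · cases h
          linarith
      · rw [union_eq_self_of_subset_left (singleton_subset_iff.2 hp)]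
    rcases le_total t (r A) with hle | hle
    · exact key (Or.inl hle)
    rcases Nat.eq_zero_or_pos n with h0 | h0
    · exact key (Or.inr h0)
    obtain ⟨a, b, L, A', R, u', v', s1, s2, h1, h2, h3, h4, h5, h6, h7, h8, h9, h10, h11⟩ :=
      ih h0 (t - r A) (by linarith) (by linarith)
    refine ⟨a + 1, b, A ∪ L, A', R, u', v', r A + s1, s2, .cons hA hp hu h1, h2, h3, h4, h5,
      by omega, by omega, by linarith, by linarith, by linarith [hr A], ?_⟩
    rw [h11]; simp only [union_assoc]

theorem frink (hr : ∀ A, 0 ≤ r A) (h0 : ∀ p, r {p} = 0)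
    (h3 : ∀ A B E : Set X, ∀ u v : X, ∀ M : ℝ, IsSubcontinuum A → IsSubcontinuum B →
      IsSubcontinuum E → u ∈ A → u ∈ B → v ∈ B → v ∈ E → r A ≤ M → r B ≤ M → r E ≤ M →
      r (A ∪ B ∪ E) ≤ 2 * M) (n : ℕ) :
    ∀ (C : Set X) (p q : X) (s : ℝ), CwChain r n C p q s → r C ≤ 2 * s := by
  induction n using Nat.strong_induction_on with
  | _ n ih =>
    intro C p q s h
    rcases Nat.eq_zero_or_pos n with hn | hn
    · subst hn
      cases h
      simp [h0]
    · have hs := h.nonneg hr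
      obtain ⟨a, b, L, A, R, u, v, s1, s2, h1, hA, hu, hv, h2, ha, hb, hs1, hs2, hrA, rfl⟩ :=
        h.split hr hn (s / 2) (by linarith) (by linarith)
      refine h3 L A R u v s h1.spec.1 hA h2.spec.1 h1.spec.2.2 hu hv h2.spec.2.1 ?_ hrA ?_
      · linarith [ih a ha _ _ _ _ h1]
      · linarith [ih b hb _ _ _ _ h2]

end CwChain

/-! ### Dynamics -/

section CwDyn

variable {X : Type*} [MetricSpace X]

theorem homeo_zpow_nat (f : X ≃ₜ X) (n : ℕ) : ((f ^ (n : ℤ) : X ≃ₜ X) : X → X) = f^[n] := by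
  funext x
  rw [zpow_natCast]
  induction n generalizing x with
  | zero => rfl
  | succ n ih => rw [pow_succ, Function.iterate_succ_apply]; exact ih _

theorem homeo_zpow_neg_nat (f : X ≃ₜ X) (n : ℕ) :
    ((f ^ (-(n : ℤ)) : X ≃ₜ X) : X → X) = f.symm^[n] := by
  rw [← homeo_zpow_nat f.symm n]
  have : f.symm = f⁻¹ := rfl
  rw [this, inv_zpow']

theorem homeo_zpow_image (f : X ≃ₜ X) (a b : ℤ) (C : Set X) :
    (f ^ a : X ≃ₜ X) '' ((f ^ b : X ≃ₜ X) '' C) = (f ^ (a + b) : X ≃ₜ X) '' C := by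
  rw [zpow_add, image_image]
  rfl

theorem IsSubcontinuum.himage {C : Set X} (hC : IsSubcontinuum C) (g : X ≃ₜ X) :
    IsSubcontinuum (g '' C) :=
  ⟨hC.1.image g.continuous, hC.2.image _ g.continuous.continuousOn⟩

/-- all iterates of `C` of absolute order less than `n` have diameter at most `c`. -/
def CwGood (f : X ≃ₜ X) (c : ℝ) (n : ℕ) (C : Set X) : Prop :=
  ∀ k : ℤ, |k| < n → diam ((f ^ k : X ≃ₜ X) '' C) ≤ c

theorem CwGood.mono {f : X ≃ₜ X} {c : ℝ} {n m : ℕ} {C : Set X} (h : CwGood f c n C) (hm : m ≤ n) :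
    CwGood f c m C := fun k hk => h k (by omega)

theorem CwGood.shift {f : X ≃ₜ X} {c : ℝ} {n m : ℕ} {C : Set X} (h : CwGood f c n C)
    (k : ℤ) (hk : |k| + m ≤ n) : CwGood f c m ((f ^ k : X ≃ₜ X) '' C) := fun j hj => by
  rw [homeo_zpow_image]
  exact h _ (by have := abs_add_le j k; omega)

variable [CompactSpace X]

theorem eq_singleton_of_good {f : X ≃ₜ X} {c : ℝ} (hc : IsCwExpansiveWith f c) {K : Set X}
    (hK : IsPreconnected K)
    (h : ∀ (k : ℤ), ∀ x ∈ K, ∀ y ∈ K, dist ((f ^ k : X ≃ₜ X) x) ((f ^ k : X ≃ₜ X) y) ≤ c) :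
    K.Subsingleton := by
  intro x hx y hy
  refine hc.2 x K ?_ hK hx hy
  intro z hz
  constructor
  · intro n
    have := h (-(n : ℤ)) x hx z hz
    rwa [homeo_zpow_neg_nat] at this
  · intro n
    have := h n x hx z hz
    rwa [homeo_zpow_nat] at this

theorem exists_uniform {f : X ≃ₜ X} {c : ℝ} (hc : IsCwExpansiveWith f c) {δ : ℝ} (hδ : 0 < δ) :
    ∃ m : ℕ, ∀ C, IsSubcontinuum C → CwGood f c m C → diam C < δ := by
  by_contra! hcon
  choose C hC hG hd using hcon
  have hpq : ∀ m, ∃ p ∈ C m, ∃ q ∈ C m, δ / 2 < dist p q := by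
    intro m
    by_contra! h
    have := diam_le_of_forall_dist_le (by linarith) h
    linarith [hd m]
  choose p hp q hq hpqd using hpq
  let U : Ultrafilter ℕ := Filter.hyperfilter ℕ
  have hU : ∀ n : ℕ, ∀ᶠ m in (U : Filter ℕ), n < m := fun n =>
    (Filter.hyperfilter_le_cofinite.trans Nat.cofinite_eq_atTop.le) (Filter.eventually_gt_atTop n)
  have hlim : ∀ x : ℕ → X, ∃ y, Filter.Tendsto x U (nhds y) := by
    intro x
    obtain ⟨y, -, hy⟩ := isCompact_univ.ultrafilter_le_nhds (U.map x) (by simp)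
    exact ⟨y, hy⟩
  let K : Set X := {x | ∀ V : Set X, IsOpen V → x ∈ V → ∀ᶠ m in (U : Filter ℕ), (C m ∩ V).Nonempty}
  have hlimK : ∀ x : ℕ → X, (∀ᶠ m in (U : Filter ℕ), x m ∈ C m) → ∀ y,
      Filter.Tendsto x U (nhds y) → y ∈ K := by
    intro x hx y hy V hV hyV
    filter_upwards [hx, hy (hV.mem_nhds hyV)] with m h1 h2
    exact ⟨x m, h1, h2⟩
  have hKc : IsClosed K := by
    rw [← isOpen_compl_iff, isOpen_iff_forall_mem_open]
    intro x hx
    simp only [K, mem_compl_iff, Set.mem_ofPred_eq, not_forall] at hx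
    obtain ⟨V, hV, hxV, hn⟩ := hx
    exact ⟨V, fun y hy hyK => hn (hyK V hV hy), hV, hxV⟩
  have hKp : IsPreconnected K := by
    rw [isPreconnected_iff_subset_of_fully_disjoint_closed hKc]
    intro u v hu hv huv hd
    obtain ⟨u', v', hu', hv', huu, hvv, hd'⟩ :=
      SeparatedNhds.of_isCompact_isCompact hu.isCompact hv.isCompact hd
    by_contra! hno
    obtain ⟨h1, h2⟩ := hno
    obtain ⟨x, hxK, hxu⟩ := not_subset.1 h1
    obtain ⟨y, hyK, hyv⟩ := not_subset.1 h2
    have hxv : x ∈ v' := hvv ((huv hxK).resolve_left hxu)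
    have hyu : y ∈ u' := huu ((huv hyK).resolve_right hyv)
    have hsub : ∀ᶠ m in (U : Filter ℕ), C m ⊆ u' ∪ v' := by
      by_contra hns
      rw [← Ultrafilter.eventually_not] at hns
      have : ∀ m, ∃ z, ¬ (C m ⊆ u' ∪ v') → z ∈ C m ∧ z ∉ u' ∪ v' := by
        intro m
        by_cases hm : C m ⊆ u' ∪ v'
        · exact ⟨x, fun h => absurd hm h⟩
        · obtain ⟨z, hz⟩ := not_subset.1 hm
          exact ⟨z, fun _ => hz⟩
      choose z hz using this
      obtain ⟨w, hw⟩ := hlim z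
      have hwK := hlimK z (hns.mono fun m hm => (hz m hm).1) w hw
      have hw' : w ∈ u' ∪ v' := (union_subset_union huu hvv) (huv hwK)
      have := (hns.and (hw ((hu'.union hv').mem_nhds hw'))).exists
      obtain ⟨m, hm1, hm2⟩ := this
      exact (hz m hm1).2 hm2
    obtain ⟨m, ⟨hm1, hm2⟩, hm3⟩ := ((hsub.and (hxK v' hv' hxv)).and (hyK u' hu' hyu)).exists
    obtain ⟨w, -, hw⟩ := (hC m).2.isPreconnected u' v' hu' hv' hm1 hm3 hm2
    exact disjoint_left.1 hd' hw.1 hw.2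
  have hKs : K.Subsingleton := by
    refine eq_singleton_of_good hc hKp ?_
    intro k x hx y hy
    by_contra! hlt
    set g : X ≃ₜ X := f ^ k with hg
    set η := (dist (g x) (g y) - c) / 2 with hη
    have hη0 : 0 < η := by linarith
    have e1 := hx (g ⁻¹' ball (g x) η) (isOpen_ball.preimage g.continuous) (by simpa using hη0)
    have e2 := hy (g ⁻¹' ball (g y) η) (isOpen_ball.preimage g.continuous) (by simpa using hη0)
    obtain ⟨m, ⟨⟨a, haC, ha⟩, ⟨b, hbC, hb⟩⟩, hm⟩ := ((e1.and e2).and (hU k.natAbs)).exists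
    have h1 := hG m k (by rw [Int.abs_eq_natAbs]; exact_mod_cast hm)
    have h2 : dist (g a) (g b) ≤ diam (g '' C m) :=
      dist_le_diam_of_mem ((hC m).himage g).1.isBounded (mem_image_of_mem _ haC)
        (mem_image_of_mem _ hbC)
    simp only [mem_preimage, mem_ball] at ha hb
    have h3 := dist_triangle4 (g x) (g a) (g b) (g y)
    rw [dist_comm (g x) (g a)] at h3
    linarith
  obtain ⟨P, hP⟩ := hlim p
  obtain ⟨Q, hQ⟩ := hlim q
  have hPK := hlimK p (Filter.Eventually.of_forall hp) P hP
  have hQK := hlimK q (Filter.Eventually.of_forall hq) Q hQ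
  have hle : δ / 2 ≤ dist P Q :=
    ge_of_tendsto (hP.dist hQ) (Filter.Eventually.of_forall fun m => (hpqd m).le)
  rw [hKs hPK hQK, dist_self] at hle
  linarith

theorem exists_good_of_diam (f : X ≃ₜ X) {c : ℝ} (hc : 0 < c) (n : ℕ) :
    ∃ γ > 0, ∀ C, IsSubcontinuum C → diam C < γ → CwGood f c n C := by
  have h1 : ∀ k : ℤ, ∃ γ > 0, ∀ C, IsSubcontinuum C → diam C < γ →
      diam ((f ^ k : X ≃ₜ X) '' C) ≤ c := by
    intro k
    have hu := CompactSpace.uniformContinuous_of_continuous (f ^ k : X ≃ₜ X).continuous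
    obtain ⟨γ, hγ, h⟩ := Metric.uniformContinuous_iff.1 hu c hc
    refine ⟨γ, hγ, fun C hC hd => diam_le_of_forall_dist_le hc.le ?_⟩
    rintro _ ⟨x, hx, rfl⟩ _ ⟨y, hy, rfl⟩
    exact (h ((dist_le_diam_of_mem hC.1.isBounded hx hy).trans_lt hd)).le
  choose γ hγ h using h1
  have hne : (Finset.Icc (-(n : ℤ)) n).Nonempty := ⟨0, by simp⟩
  refine ⟨(Finset.Icc (-(n : ℤ)) n).inf' hne γ, ?_, ?_⟩
  · simpa [Finset.lt_inf'_iff] using fun k _ _ => hγ k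
  · intro C hC hd k hk
    refine h k C hC (hd.trans_le (Finset.inf'_le _ ?_))
    rw [Finset.mem_Icc]
    have := abs_lt.1 hk
    omega

open Classical in
noncomputable def cwRho (f : X ≃ₜ X) (c lam : ℝ) (C : Set X) : ℝ :=
  if h : ∃ n, ¬ CwGood f c (n + 1) C then lam ^ Nat.find h else 0

theorem cwRho_cases (f : X ≃ₜ X) (c lam : ℝ) (C : Set X) :
    (cwRho f c lam C = 0 ∧ ∀ n, CwGood f c n C) ∨
    ∃ n, cwRho f c lam C = lam ^ n ∧ ∀ m, CwGood f c m C ↔ m ≤ n := by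
  classical
  unfold cwRho
  split_ifs with h
  · right
    refine ⟨_, rfl, fun m => ⟨fun hm => ?_, fun hm => ?_⟩⟩
    · by_contra! hlt
      exact Nat.find_spec h (hm.mono (by omega))
    · rcases m with _ | m
      · intro k hk
        have := abs_nonneg k
        simp only [Nat.cast_zero] at hk
        omega
      · exact not_not.1 (Nat.find_min h (m := m) (by omega))
  · left
    push Not at h
    exact ⟨rfl, fun n => (h n).mono (by omega)⟩

theorem cwRho_le_iff (f : X ≃ₜ X) {c lam : ℝ} (h0 : 0 < lam) (h1 : lam < 1) (C : Set X) (n : ℕ) :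
    cwRho f c lam C ≤ lam ^ n ↔ CwGood f c n C := by
  rcases cwRho_cases f c lam C with ⟨h, hg⟩ | ⟨m, h, hg⟩
  · rw [h]
    exact ⟨fun _ => hg n, fun _ => by positivity⟩
  · rw [h, hg, pow_le_pow_iff_right_of_lt_one₀ h0 h1]

theorem cwRho_nonneg (f : X ≃ₜ X) {c lam : ℝ} (h0 : 0 < lam) (C : Set X) :
    0 ≤ cwRho f c lam C := by
  rcases cwRho_cases f c lam C with ⟨h, hg⟩ | ⟨m, h, hg⟩ <;> rw [h]
  positivity

theorem cwRho_eq_zero (f : X ≃ₜ X) {c lam : ℝ} (h0 : 0 < lam) {C : Set X}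
    (h : cwRho f c lam C = 0) (n : ℕ) : CwGood f c n C := by
  rcases cwRho_cases f c lam C with ⟨h', hg⟩ | ⟨m, h', hg⟩
  · exact hg n
  · rw [h'] at h
    exact absurd h (by positivity)

theorem cwRho_of_good (f : X ≃ₜ X) {c lam : ℝ} {C : Set X}
    (h : ∀ n, CwGood f c n C) : cwRho f c lam C = 0 := by
  rcases cwRho_cases f c lam C with ⟨h', hg⟩ | ⟨m, h', hg⟩
  · exact h'
  · have := (hg (m + 1)).1 (h _)
    omega

theorem cwRho_singleton (f : X ≃ₜ X) {c lam : ℝ} (hc : 0 < c) (p : X) :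
    cwRho f c lam {p} = 0 :=
  cwRho_of_good f fun n k _ => by simp [hc.le]

theorem cwRho_shift (f : X ≃ₜ X) {c lam : ℝ} (h0 : 0 < lam) (h1 : lam < 1) {C : Set X} (k : ℤ)
    (h : ∀ n, CwGood f c n C → CwGood f c (n + k.natAbs) ((f ^ k : X ≃ₜ X) '' C)) :
    cwRho f c lam ((f ^ k : X ≃ₜ X) '' C) ≤ lam ^ k.natAbs * cwRho f c lam C := by
  rcases cwRho_cases f c lam C with ⟨h', hg⟩ | ⟨m, h', hg⟩
  · rw [cwRho_of_good f fun n => (h n (hg n)).mono (by omega), h', mul_zero]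
  · rw [h', ← pow_add, cwRho_le_iff f h0 h1, add_comm]
    exact h m ((hg m).2 le_rfl)

theorem cwRho_triple (f : X ≃ₜ X) {c lam : ℝ} (hc : 0 < c) (h0 : 0 < lam) (h1 : lam < 1) {m : ℕ}
    (hm : ∀ C, IsSubcontinuum C → CwGood f c m C → diam C < c / 3) (hlam : lam ^ m = 1 / 2)
    (A B E : Set X) (u v : X) (M : ℝ) (hA : IsSubcontinuum A) (hB : IsSubcontinuum B)
    (hE : IsSubcontinuum E) (huA : u ∈ A) (huB : u ∈ B) (hvB : v ∈ B) (hvE : v ∈ E)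
    (hMA : cwRho f c lam A ≤ M) (hMB : cwRho f c lam B ≤ M) (hME : cwRho f c lam E ≤ M) :
    cwRho f c lam (A ∪ B ∪ E) ≤ 2 * M := by
  have main : ∀ n, CwGood f c (n + m) A → CwGood f c (n + m) B → CwGood f c (n + m) E →
      CwGood f c n (A ∪ B ∪ E) := by
    intro n gA gB gE k hk
    have dA := hm _ (hA.himage (f ^ k)) (gA.shift k (by push_cast; omega))
    have dB := hm _ (hB.himage (f ^ k)) (gB.shift k (by push_cast; omega))
    have dE := hm _ (hE.himage (f ^ k)) (gE.shift k (by push_cast; omega))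
    rw [image_union, image_union]
    have e1 := diam_union' (s := (f ^ k : X ≃ₜ X) '' A ∪ (f ^ k : X ≃ₜ X) '' B)
      (t := (f ^ k : X ≃ₜ X) '' E)
      ⟨(f ^ k : X ≃ₜ X) v, Or.inr (mem_image_of_mem _ hvB), mem_image_of_mem _ hvE⟩
    have e2 := diam_union' (s := (f ^ k : X ≃ₜ X) '' A) (t := (f ^ k : X ≃ₜ X) '' B)
      ⟨(f ^ k : X ≃ₜ X) u, mem_image_of_mem _ huA, mem_image_of_mem _ huB⟩
    linarith
  -- reduce to M being attained
  have key : ∀ S : Set X, cwRho f c lam S ≤ M → cwRho f c lam A ≤ cwRho f c lam S →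
      cwRho f c lam B ≤ cwRho f c lam S → cwRho f c lam E ≤ cwRho f c lam S →
      cwRho f c lam (A ∪ B ∪ E) ≤ 2 * M := by
    intro S hS kA kB kE
    refine le_trans ?_ (mul_le_mul_of_nonneg_left hS (by norm_num))
    rcases cwRho_cases f c lam S with ⟨h', hg⟩ | ⟨n, h', hg⟩
    · rw [h'] at kA kB kE ⊢
      have zA := cwRho_eq_zero f h0 (le_antisymm kA (cwRho_nonneg f h0 A))
      have zB := cwRho_eq_zero f h0 (le_antisymm kB (cwRho_nonneg f h0 B))
      have zE := cwRho_eq_zero f h0 (le_antisymm kE (cwRho_nonneg f h0 E))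
      rw [cwRho_of_good f fun n => main n (zA _) (zB _) (zE _), mul_zero]
    · rw [h'] at kA kB kE ⊢
      rw [cwRho_le_iff f h0 h1] at kA kB kE
      rcases le_total m n with hmn | hmn
      · obtain ⟨d, rfl⟩ := Nat.exists_eq_add_of_le' hmn
        have := (cwRho_le_iff f h0 h1 _ _).2 (main d kA kB kE)
        rw [pow_add, hlam]
        linarith
      · have e1 : cwRho f c lam (A ∪ B ∪ E) ≤ lam ^ 0 := by
          rw [cwRho_le_iff f h0 h1]
          intro k hk
          have := abs_nonneg k
          simp only [Nat.cast_zero] at hk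
          omega
        have e2 := pow_le_pow_of_le_one h0.le h1.le hmn
        rw [pow_zero] at e1
        linarith
  rcases le_total (cwRho f c lam A) (cwRho f c lam B) with hab | hab
  · rcases le_total (cwRho f c lam B) (cwRho f c lam E) with hbe | hbe
    · exact key E hME (hab.trans hbe) hbe le_rfl
    · exact key B hMB hab le_rfl hbe
  · rcases le_total (cwRho f c lam A) (cwRho f c lam E) with hbe | hbe
    · exact key E hME hbe (hab.trans hbe) le_rfl
    · exact key A hMA le_rfl hab hbe

end CwDyn

/-- every cw-expansive homeomorphism of a compact metric space
admits a hyperbolic cw-metric. -/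
theorem exists_hyperbolic_cw_metric
    {X : Type*} [MetricSpace X] [CompactSpace X] (f : X ≃ₜ X)
    (hcw : ∃ c : ℝ, IsCwExpansiveWith f c) :
    ∃ D : Set X → X → X → ℝ,
      -- (1a) nonnegativity, vanishing exactly on singletons
      (∀ C p q, IsSubcontinuum C → p ∈ C → q ∈ C →
        0 ≤ D C p q ∧ (D C p q = 0 ↔ ∃ x, C = {x})) ∧
      -- (1b) symmetry
      (∀ C p q, IsSubcontinuum C → p ∈ C → q ∈ C → D C p q = D C q p) ∧
      -- (1c) triangle inequality
      (∀ A B a b c, IsSubcontinuum A → IsSubcontinuum B → IsSubcontinuum (A ∪ B) →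
        a ∈ A → b ∈ A ∩ B → c ∈ B →
        D (A ∪ B) a c ≤ D A a b + D B b c) ∧
      -- (2) hyperbolicity
      (∃ lam : ℝ, lam ∈ Set.Ioo (0:ℝ) 1 ∧ ∃ ε : ℝ, 0 < ε ∧
        (∀ C p q, IsSubcontinuum C → p ∈ C → q ∈ C →
          (∀ k : ℕ, diam (f^[k] '' C) ≤ ε) →
          ∀ n : ℕ, D (f^[n] '' C) (f^[n] p) (f^[n] q) ≤ 4 * lam ^ n * D C p q) ∧
        (∀ C p q, IsSubcontinuum C → p ∈ C → q ∈ C →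
          (∀ k : ℕ, diam (f.symm^[k] '' C) ≤ ε) →
          ∀ n : ℕ, D (f.symm^[n] '' C) (f.symm^[n] p) (f.symm^[n] q) ≤ 4 * lam ^ n * D C p q)) ∧
      -- (3) compatibility with the diameter
      (∀ δ : ℝ, 0 < δ → ∃ γ : ℝ, 0 < γ ∧
        (∀ C p q, IsSubcontinuum C → p ∈ C → q ∈ C → diam C < γ → D C p q < δ) ∧
        (∀ C p q, IsSubcontinuum C → p ∈ C → q ∈ C → D C p q < γ → diam C < δ)) := by
  obtain ⟨c, hc⟩ := hcw
  have hc0 := hc.1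
  obtain ⟨m0, hm0⟩ := exists_uniform hc (δ := c / 3) (by linarith)
  obtain ⟨m, hmpos, hm⟩ : ∃ m : ℕ, 0 < m ∧
      ∀ C, IsSubcontinuum C → CwGood f c m C → diam C < c / 3 :=
    ⟨m0 + 1, by omega, fun C hC hG => hm0 C hC (hG.mono (by omega))⟩
  obtain ⟨lam, h0, h1, hlam⟩ : ∃ lam : ℝ, 0 < lam ∧ lam < 1 ∧ lam ^ m = 1 / 2 := by
    refine ⟨(1 / 2 : ℝ) ^ ((m : ℝ)⁻¹), by positivity, ?_, ?_⟩
    · exact Real.rpow_lt_one (by norm_num) (by norm_num) (by positivity)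
    · exact Real.rpow_inv_natCast_pow (by norm_num) (by omega)
  set r : Set X → ℝ := cwRho f c lam with hr
  have hr0 : ∀ A, 0 ≤ r A := cwRho_nonneg f h0
  have hrs : ∀ p, r {p} = 0 := cwRho_singleton f hc0
  have hfr := CwChain.frink (r := r) hr0 hrs (cwRho_triple f hc0 h0 h1 hm hlam)
  let D : Set X → X → X → ℝ := fun C p q => sInf {s | ∃ n, CwChain r n C p q s}
  have hbdd : ∀ C p q, BddBelow {s | ∃ n, CwChain r n C p q s} := fun C p q =>
    ⟨0, fun s ⟨n, h⟩ => h.nonneg hr0⟩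
  have hne : ∀ C p q, IsSubcontinuum C → p ∈ C → q ∈ C →
      {s | ∃ n, CwChain r n C p q s}.Nonempty := fun C p q hC hp hq =>
    ⟨r C, 1, .single hC hp hq⟩
  have hDle : ∀ C p q, IsSubcontinuum C → p ∈ C → q ∈ C → D C p q ≤ r C := fun C p q hC hp hq =>
    csInf_le (hbdd _ _ _) ⟨1, .single hC hp hq⟩
  have hDge : ∀ C p q, IsSubcontinuum C → p ∈ C → q ∈ C → r C ≤ 2 * D C p q := by
    intro C p q hC hp hq
    have : r C / 2 ≤ D C p q := le_csInf (hne C p q hC hp hq) fun s ⟨n, h⟩ => by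
      linarith [hfr n C p q s h]
    linarith
  have hDnn : ∀ C p q, 0 ≤ D C p q := fun C p q =>
    Real.sInf_nonneg fun s ⟨n, h⟩ => h.nonneg hr0
  have hshift : ∀ C p q, IsSubcontinuum C → p ∈ C → q ∈ C → ∀ k : ℤ,
      (∀ n, CwGood f c n C → CwGood f c (n + k.natAbs) ((f ^ k : X ≃ₜ X) '' C)) →
      D ((f ^ k : X ≃ₜ X) '' C) ((f ^ k : X ≃ₜ X) p) ((f ^ k : X ≃ₜ X) q)
        ≤ 4 * lam ^ k.natAbs * D C p q := by
    intro C p q hC hp hq k h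
    have e1 := hDle _ _ _ (hC.himage (f ^ k)) (mem_image_of_mem _ hp) (mem_image_of_mem _ hq)
    have e2 := cwRho_shift f h0 h1 k h
    have e3 := mul_le_mul_of_nonneg_left (hDge C p q hC hp hq) (pow_pos h0 k.natAbs).le
    have e4 := mul_nonneg (pow_pos h0 k.natAbs).le (hDnn C p q)
    have e5 := e1.trans (e2.trans e3)
    linarith
  refine ⟨D, ?_, ?_, ?_, ⟨lam, ⟨h0, h1⟩, c, hc0, ?_, ?_⟩, ?_⟩
  · intro C p q hC hp hq
    refine ⟨hDnn C p q, fun h => ?_, ?_⟩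
    · have hz : r C = 0 := le_antisymm (by linarith [hDge C p q hC hp hq]) (hr0 C)
      have hg := cwRho_eq_zero f h0 hz
      have hss : C.Subsingleton := eq_singleton_of_good hc hC.2.isPreconnected
        fun k x hx y hy => (dist_le_diam_of_mem (hC.himage (f ^ k)).1.isBounded
          (mem_image_of_mem _ hx) (mem_image_of_mem _ hy)).trans
          (hg (k.natAbs + 1) k (by push_cast; omega))
      exact ⟨p, hss.eq_singleton_of_mem hp⟩
    · rintro ⟨x, rfl⟩
      exact le_antisymm ((hDle _ _ _ hC hp hq).trans (hrs x).le) (hDnn _ _ _)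
  · intro C p q _ _ _
    have : {s | ∃ n, CwChain r n C p q s} = {s | ∃ n, CwChain r n C q p s} := by
      ext s
      exact ⟨fun ⟨n, h⟩ => ⟨n, h.reverse⟩, fun ⟨n, h⟩ => ⟨n, h.reverse⟩⟩
    simp only [D, this]
  · intro A B a b e hA hB _ ha hb he
    refine le_of_forall_pos_le_add fun η hη => ?_
    obtain ⟨s, ⟨n, hs⟩, hs'⟩ := Real.lt_sInf_add_pos (hne A a b hA ha hb.1) (half_pos hη)
    obtain ⟨t, ⟨k, ht⟩, ht'⟩ := Real.lt_sInf_add_pos (hne B b e hB hb.2 he) (half_pos hη)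
    have : D (A ∪ B) a e ≤ s + t := csInf_le (hbdd _ _ _) ⟨_, hs.append ht⟩
    simp only [D] at this ⊢
    linarith
  · intro C p q hC hp hq hst n
    have := hshift C p q hC hp hq n ?_
    · rwa [homeo_zpow_nat, Int.natAbs_natCast] at this
    · intro j hj k hk
      rw [homeo_zpow_image]
      rcases le_or_gt 0 (k + n) with h | h
      · obtain ⟨i, hi⟩ := Int.eq_ofNat_of_zero_le h
        rw [hi, homeo_zpow_nat]
        exact hst i
      · refine hj _ ?_
        rw [abs_lt] at hk ⊢
        push_cast at hk
        simp only [Nat.abs_cast] at hk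
        omega
  · intro C p q hC hp hq hst n
    have := hshift C p q hC hp hq (-n) ?_
    · rwa [homeo_zpow_neg_nat, Int.natAbs_neg, Int.natAbs_natCast] at this
    · intro j hj k hk
      rw [homeo_zpow_image]
      rcases le_or_gt (k + -n) 0 with h | h
      · obtain ⟨i, hi⟩ := Int.eq_ofNat_of_zero_le (neg_nonneg.2 h)
        rw [show k + -(n : ℤ) = -(i : ℤ) by omega, homeo_zpow_neg_nat]
        exact hst i
      · refine hj _ ?_
        rw [abs_lt] at hk ⊢
        push_cast at hk
        simp only [abs_neg, Nat.abs_cast] at hk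
        omega
  · intro δ hδ
    obtain ⟨n, hn⟩ := exists_pow_lt_of_lt_one hδ h1
    obtain ⟨γ1, hγ1, hg1⟩ := exists_good_of_diam f hc0 n
    obtain ⟨k, hk⟩ := exists_uniform hc hδ
    refine ⟨min γ1 (lam ^ k / 2), lt_min hγ1 (by positivity), ?_, ?_⟩
    · intro C p q hC hp hq hd
      have := (cwRho_le_iff f h0 h1 C n).2 (hg1 C hC (hd.trans_le (min_le_left _ _)))
      exact ((hDle C p q hC hp hq).trans this).trans_lt hn
    · intro C p q hC hp hq hd
      have e := hd.trans_le (min_le_right _ _)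
      refine hk C hC ((cwRho_le_iff f h0 h1 C k).1 ?_)
      have := hDge C p q hC hp hq
      simp only [hr] at this
      linarith
end

section
/- For every n ≥ 1, the number of n-periodic points of f_A is Per_n(f_A) = λ^n + λ^{−n} − 2. -/
open Matrix

/-- The 2-torus ℝ²/ℤ². -/
abbrev Torus : Type := AddCircle (1:ℝ) × AddCircle (1:ℝ)

/-- The quotient map ℝ² → 𝕋². -/
noncomputable def torusMk (v : ℝ × ℝ) : Torus := (↑v.1, ↑v.2)

/-- The linear action of an integer matrix `A ∈ SL(2,ℤ)` on ℝ². -/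
noncomputable def matAct (A : Matrix.SpecialLinearGroup (Fin 2) ℤ) (v : ℝ × ℝ) : ℝ × ℝ :=
  ((A.1 0 0 : ℤ) * v.1 + (A.1 0 1 : ℤ) * v.2,
   (A.1 1 0 : ℤ) * v.1 + (A.1 1 1 : ℤ) * v.2)

lemma circ_zero (x : ℝ) : ((x : ℝ) : AddCircle (1:ℝ)) = 0 ↔ ∃ k : ℤ, (k : ℝ) = x := by
  rw [AddCircle.coe_eq_zero_iff]; simp

lemma circ_eq (x y : ℝ) : (x : AddCircle (1:ℝ)) = (y : AddCircle (1:ℝ)) ↔ ∃ k : ℤ, (k : ℝ) = x - y := by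
  rw [← sub_eq_zero, ← AddCircle.coe_sub, circ_zero]

lemma index_range_mat (M : Matrix (Fin 2) (Fin 2) ℤ) (hM : M.det ≠ 0) :
    (LinearMap.range M.mulVecLin).toAddSubgroup.index = M.det.natAbs := by
  have hinj : Function.Injective M.mulVecLin := by
    have := Matrix.mulVec_injective_of_det_ne_zero hM
    exact this
  have h := Submodule.natAbs_det_equiv (LinearMap.range M.mulVecLin)
    (LinearEquiv.ofInjective M.mulVecLin hinj)
  have h2 : (LinearMap.range M.mulVecLin).subtype ∘ₗ
      AddMonoidHom.toIntLinearMap ((LinearEquiv.ofInjective M.mulVecLin hinj :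
        _ ≃ₗ[ℤ] _) : (Fin 2 → ℤ) →+ (LinearMap.range M.mulVecLin)) = Matrix.toLin' M := by
    ext; rfl
  rw [h2, LinearMap.det_toLin'] at h
  rw [h]; rfl

lemma card_sol (M : Matrix (Fin 2) (Fin 2) ℤ) (hM : M.det ≠ 0) (S : Set Torus)
    (hS : ∀ v : ℝ × ℝ, torusMk v ∈ S ↔ (∃ k l : ℤ, (k : ℝ) = M 0 0 * v.1 + M 0 1 * v.2 ∧
      (l : ℝ) = M 1 0 * v.1 + M 1 1 * v.2)) : Nat.card S = M.det.natAbs := by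
  have hD : (M 0 0 * M 1 1 - M 0 1 * M 1 0 : ℝ) ≠ 0 := by
    rw [Matrix.det_fin_two] at hM
    exact_mod_cast hM
  obtain ⟨D, hDD⟩ : ∃ D : ℝ, D = M 0 0 * M 1 1 - M 0 1 * M 1 0 := ⟨_, rfl⟩
  rw [← hDD] at hD
  let φ : (Fin 2 → ℤ) →+ Torus :=
    { toFun := fun w => torusMk ((M 1 1 * w 0 - M 0 1 * w 1) / D, (M 0 0 * w 1 - M 1 0 * w 0) / D)
      map_zero' := by simp [torusMk]
      map_add' := by
        intro x y
        simp only [torusMk, Prod.mk_add_mk, ← AddCircle.coe_add, Pi.add_apply]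
        push_cast
        congr 2 <;> ring }
  have hφ : ∀ w, φ w = torusMk ((M 1 1 * w 0 - M 0 1 * w 1) / D, (M 0 0 * w 1 - M 1 0 * w 0) / D) :=
    fun w => rfl
  have hker : φ.ker = (LinearMap.range M.mulVecLin).toAddSubgroup := by
    ext w
    rw [AddMonoidHom.mem_ker, hφ]
    simp only [torusMk, Prod.mk_eq_zero, circ_zero, Submodule.mem_toAddSubgroup,
      LinearMap.mem_range, Matrix.mulVecLin_apply]
    constructor
    · rintro ⟨⟨k, hk⟩, l, hl⟩
      refine ⟨![k, l], ?_⟩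
      rw [eq_div_iff hD] at hk hl
      ext i
      fin_cases i
      · simp [Matrix.mulVec, dotProduct, Fin.sum_univ_two]
        have : (M 0 0 * k + M 0 1 * l - w 0 : ℝ) * D = 0 := by
          linear_combination M 0 0 * hk + M 0 1 * hl - w 0 * hDD
        rcases mul_eq_zero.1 this with h | h
        · rw [sub_eq_zero] at h; exact_mod_cast h
        · exact absurd h hD
      · simp [Matrix.mulVec, dotProduct, Fin.sum_univ_two]
        have : (M 1 0 * k + M 1 1 * l - w 1 : ℝ) * D = 0 := by
          linear_combination M 1 0 * hk + M 1 1 * hl - w 1 * hDD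
        rcases mul_eq_zero.1 this with h | h
        · rw [sub_eq_zero] at h; exact_mod_cast h
        · exact absurd h hD
    · rintro ⟨u, rfl⟩
      refine ⟨⟨u 0, ?_⟩, u 1, ?_⟩ <;> rw [eq_div_iff hD] <;>
        simp [Matrix.mulVec, dotProduct, Fin.sum_univ_two, hDD] <;> ring
  have hrange : S = (φ.range : Set Torus) := by
    ext x
    obtain ⟨⟨a⟩, ⟨b⟩⟩ := x
    change torusMk (a, b) ∈ S ↔ _
    rw [hS, SetLike.mem_coe, AddMonoidHom.mem_range]
    constructor
    · rintro ⟨k, l, hk, hl⟩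
      refine ⟨![k, l], ?_⟩
      rw [hφ]
      change _ = torusMk (a, b)
      congr 2
      · rw [div_eq_iff hD]; simp [hk, hl, hDD]; ring
      · rw [div_eq_iff hD]; simp [hk, hl, hDD]; ring
    · rintro ⟨w, hw⟩
      change φ w = torusMk (a, b) at hw
      rw [hφ] at hw
      rw [← hS, ← hw, hS]
      refine ⟨w 0, w 1, ?_, ?_⟩ <;> field_simp <;> rw [hDD] <;> ring
  rw [hrange, ← index_range_mat M hM, ← hker, AddSubgroup.index_ker]
  rfl

lemma trace_pow_mat (M : Matrix (Fin 2) (Fin 2) ℤ) (hM : M.det = 1) (lam : ℝ) (h0 : lam ≠ 0)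
    (htr : (M 0 0 : ℝ) + M 1 1 = lam + lam⁻¹) (n : ℕ) :
    (((M ^ n) 0 0 : ℤ) : ℝ) + ((M ^ n) 1 1 : ℤ) = lam ^ n + lam⁻¹ ^ n := by
  have hsq : M ^ 2 = (M 0 0 + M 1 1) • M - 1 := by
    rw [Matrix.det_fin_two] at hM
    ext i j
    fin_cases i <;> fin_cases j <;> simp [pow_two, Matrix.mul_apply, Fin.sum_univ_two, Matrix.sub_apply, Matrix.smul_apply, -zsmul_eq_mul] <;>
      grind
  induction n using Nat.twoStepInduction with
  | zero => norm_num
  | one => simpa using htr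
  | more n ih1 ih2 =>
    have h : M ^ (n + 2) = (M 0 0 + M 1 1) • M ^ (n + 1) - M ^ n := by
      rw [pow_add, hsq, mul_sub, mul_one, mul_smul_comm, pow_succ]
    rw [h]
    simp only [Matrix.sub_apply, Matrix.smul_apply, smul_eq_mul]
    push_cast
    have hl : lam * lam⁻¹ = 1 := mul_inv_cancel₀ h0
    rw [htr]
    linear_combination (lam + lam⁻¹) * ih2 - ih1 + (lam ^ n + lam⁻¹ ^ n) * hl

/-- `Per_n(f_A) = λ^n + λ^{-n} - 2`. -/
theorem card_periodic_points_torus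
    (A : Matrix.SpecialLinearGroup (Fin 2) ℤ)
    (lam : ℝ) (hlam : 1 < lam)
    -- the eigenvalues of A are lam and lam⁻¹, i.e. tr A = lam + lam⁻¹ (det A = 1)
    (htr : ((A.1 0 0 : ℤ) : ℝ) + ((A.1 1 1 : ℤ) : ℝ) = lam + lam⁻¹)
    (fA : Torus ≃ₜ Torus)
    (hfA : ∀ v : ℝ × ℝ, fA (torusMk v) = torusMk (matAct A v)) :
    ∀ n : ℕ, 1 ≤ n →
      (Nat.card {x : Torus | fA^[n] x = x} : ℝ) = lam ^ n + lam⁻¹ ^ n - 2 := by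
  intro n hn
  have h0 : lam ≠ 0 := by positivity
  have hit : ∀ (m : ℕ) (v : ℝ × ℝ), fA^[m] (torusMk v) = torusMk
      ((((A.1 ^ m) 0 0 : ℤ) : ℝ) * v.1 + ((A.1 ^ m) 0 1 : ℤ) * v.2,
       (((A.1 ^ m) 1 0 : ℤ) : ℝ) * v.1 + ((A.1 ^ m) 1 1 : ℤ) * v.2) := by
    intro m v
    induction m with
    | zero => simp
    | succ m ih =>
      rw [Function.iterate_succ_apply', ih, hfA, pow_succ']
      simp only [matAct, Matrix.mul_apply, Fin.sum_univ_two]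
      push_cast
      congr 2 <;> ring
  have htn := trace_pow_mat A.1 A.2 lam h0 htr n
  have hdn : (A.1 ^ n).det = 1 := by rw [Matrix.det_pow, A.2, one_pow]
  replace hit := hit n
  generalize A.1 ^ n = B at *
  have hdet : (B - 1).det = 2 - (B 0 0 + B 1 1) := by
    rw [Matrix.det_fin_two] at *
    simp
    linear_combination hdn
  have hpos : 0 < lam ^ n + lam⁻¹ ^ n - 2 := by
    have h1 : 1 < lam ^ n := one_lt_pow₀ hlam (by omega)
    have h2 : lam ^ n * lam⁻¹ ^ n = 1 := by rw [← mul_pow, mul_inv_cancel₀ h0, one_pow]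
    have : 0 < lam⁻¹ ^ n := by positivity
    nlinarith [mul_pos this (mul_pos (sub_pos.2 h1) (sub_pos.2 h1))]
  have hneg : (B - 1).det < 0 := by
    have : ((B - 1).det : ℝ) < 0 := by rw [hdet]; push_cast; linarith
    exact_mod_cast this
  rw [card_sol (B - 1) hneg.ne]
  · rw [Nat.cast_natAbs, abs_of_neg hneg, hdet]; push_cast; linarith
  · intro v
    rw [Set.mem_ofPred_eq, hit]
    simp only [torusMk, Prod.mk.injEq, circ_eq]
    simp
    constructor
    · rintro ⟨⟨k, hk⟩, l, hl⟩
      exact ⟨⟨k, by linarith⟩, l, by linarith⟩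
    · rintro ⟨⟨k, hk⟩, l, hl⟩
      exact ⟨⟨k, by linarith⟩, l, by linarith⟩
end

section
/- For every n ≥ 1, the number of antipodal n-periodic points of f_A is Per_n^−(f_A) = λ^n + λ^{−n} + 2. -/
open Matrix

lemma torus_zero_iff (x : ℝ) : ((x : AddCircle (1:ℝ)) = 0) ↔ ∃ k : ℤ, x = k := by
  rw [AddCircle.coe_eq_zero_iff]
  simp [eq_comm]

/-- the hom ℤ² → torus, w ↦ B⁻¹ w -/
noncomputable def phiHom (B : Matrix (Fin 2) (Fin 2) ℤ) : (Fin 2 → ℤ) →+ Torus where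
  toFun w := ((((B 1 1 * w 0 - B 0 1 * w 1) / B.det : ℝ) : AddCircle (1:ℝ)),
    (((-B 1 0 * w 0 + B 0 0 * w 1) / B.det : ℝ) : AddCircle (1:ℝ)))
  map_zero' := by simp
  map_add' v w := by
    ext <;> simp only [Prod.fst_add, Prod.snd_add, ← AddCircle.coe_add] <;> congr 1 <;>
      simp <;> ring

lemma card_ker (B : Matrix (Fin 2) (Fin 2) ℤ) (hB : B.det ≠ 0) :
    Nat.card {x : Torus | B 0 0 • x.1 + B 0 1 • x.2 = 0 ∧ B 1 0 • x.1 + B 1 1 • x.2 = 0}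
      = B.det.natAbs := by
  have hdet : (B.det : ℝ) = B 0 0 * B 1 1 - B 0 1 * B 1 0 := by
    rw [Matrix.det_fin_two]; push_cast; ring
  have hd : (B.det : ℝ) ≠ 0 := by exact_mod_cast hB
  have hinj : Function.Injective (Matrix.toLin' B) := by
    rw [injective_iff_map_eq_zero]
    intro v hv
    exact Matrix.eq_zero_of_mulVec_eq_zero hB hv
  have h1 := Submodule.natAbs_det_equiv (LinearMap.range (Matrix.toLin' B))
    (LinearEquiv.ofInjective (Matrix.toLin' B) hinj)
  have h2 : (LinearMap.range (Matrix.toLin' B)).subtype ∘ₗ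
    ((LinearEquiv.ofInjective (Matrix.toLin' B) hinj : (Fin 2 → ℤ) ≃ₗ[ℤ] _) : (Fin 2 → ℤ) →ₗ[ℤ] _) = Matrix.toLin' B := by
    ext; rfl
  have hker : (LinearMap.range (Matrix.toLin' B)).toAddSubgroup = (phiHom B).ker := by
    ext w
    simp only [Submodule.mem_toAddSubgroup, LinearMap.mem_range, AddMonoidHom.mem_ker]
    simp only [phiHom, AddMonoidHom.coe_mk, ZeroHom.coe_mk, Prod.ext_iff, Prod.fst_zero,
      Prod.snd_zero, torus_zero_iff]
    constructor
    · rintro ⟨v, rfl⟩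
      refine ⟨⟨v 0, ?_⟩, ⟨v 1, ?_⟩⟩ <;>
      · rw [div_eq_iff hd, hdet]
        simp [Matrix.mulVec, dotProduct, Fin.sum_univ_two]; ring
    · rintro ⟨⟨k, hk⟩, ⟨l, hl⟩⟩
      rw [div_eq_iff hd] at hk hl
      refine ⟨![k, l], ?_⟩
      ext i
      fin_cases i
      · have : (B.det : ℝ) * (B 0 0 * k + B 0 1 * l) = B.det * w 0 := by
          rw [hdet] at *
          linear_combination - (B 0 0 : ℝ) * hk - (B 0 1 : ℝ) * hl
        have := mul_left_cancel₀ hd this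
        simp [Matrix.mulVec, dotProduct, Fin.sum_univ_two]
        exact_mod_cast this
      · have : (B.det : ℝ) * (B 1 0 * k + B 1 1 * l) = B.det * w 1 := by
          rw [hdet] at *
          linear_combination - (B 1 0 : ℝ) * hk - (B 1 1 : ℝ) * hl
        have := mul_left_cancel₀ hd this
        simp [Matrix.mulVec, dotProduct, Fin.sum_univ_two]
        exact_mod_cast this
  have hrange : {x : Torus | B 0 0 • x.1 + B 0 1 • x.2 = 0 ∧ B 1 0 • x.1 + B 1 1 • x.2 = 0}
      = ((phiHom B).range : Set Torus) := by
    ext ⟨x, y⟩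
    induction x using QuotientAddGroup.induction_on with | H x => ?_
    induction y using QuotientAddGroup.induction_on with | H y => ?_
    simp only [Set.mem_ofPred_eq, AddMonoidHom.coe_range, Set.mem_range]
    simp only [← AddCircle.coe_zsmul, ← AddCircle.coe_add, torus_zero_iff, zsmul_eq_mul]
    simp only [phiHom, AddMonoidHom.coe_mk, ZeroHom.coe_mk, Prod.ext_iff]
    constructor
    · rintro ⟨⟨k, hk⟩, ⟨l, hl⟩⟩
      refine ⟨![k, l], ?_, ?_⟩
      · refine congrArg (fun t : ℝ => (t : AddCircle (1:ℝ))) ?_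
        rw [div_eq_iff hd, hdet]
        simp [← hk, ← hl]; ring
      · refine congrArg (fun t : ℝ => (t : AddCircle (1:ℝ))) ?_
        rw [div_eq_iff hd, hdet]
        simp [← hk, ← hl]; ring
    · rintro ⟨w, h1, h2⟩
      have e1 := sub_eq_zero.2 h1
      have e2 := sub_eq_zero.2 h2
      erw [← AddCircle.coe_sub, torus_zero_iff] at e1 e2
      obtain ⟨k, hk⟩ := e1
      obtain ⟨l, hl⟩ := e2
      rw [sub_eq_iff_eq_add, div_eq_iff hd] at hk hl
      constructor
      · refine ⟨w 0 - B 0 0 * k - B 0 1 * l, ?_⟩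
        apply mul_left_cancel₀ hd
        rw [hdet] at *
        push_cast
        linear_combination - (B 0 0 : ℝ) * hk - (B 0 1 : ℝ) * hl
      · refine ⟨w 1 - B 1 0 * k - B 1 1 * l, ?_⟩
        apply mul_left_cancel₀ hd
        rw [hdet] at *
        push_cast
        linear_combination - (B 1 0 : ℝ) * hk - (B 1 1 : ℝ) * hl
  rw [hrange]
  have e := (QuotientAddGroup.quotientKerEquivRange (phiHom B)).toEquiv
  have h3 : Matrix.det B = LinearMap.det ((LinearMap.range (Matrix.toLin' B)).subtype ∘ₗ
      AddMonoidHom.toIntLinearMap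
        ((LinearEquiv.ofInjective (Matrix.toLin' B) hinj : (Fin 2 → ℤ) ≃ₗ[ℤ] _) :
          (Fin 2 → ℤ) →+ LinearMap.range (Matrix.toLin' B))) := by
    rw [← LinearMap.det_toLin']
    exact congrArg LinearMap.det h2.symm
  rw [h3, h1]
  have h4 : Nat.card ((Fin 2 → ℤ) ⧸ (LinearMap.range (Matrix.toLin' B)).toAddSubgroup)
      = Nat.card ((Fin 2 → ℤ) ⧸ (phiHom B).ker) := by rw [hker]
  exact (Nat.card_congr e).symm.trans h4.symm

lemma trace_pow_aux (A : Matrix (Fin 2) (Fin 2) ℤ) (hA : A.det = 1) (lam : ℝ) (hlam : 1 < lam)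
    (htr : ((A 0 0 : ℤ) : ℝ) + ((A 1 1 : ℤ) : ℝ) = lam + lam⁻¹) (n : ℕ) :
    (((A ^ n).trace : ℤ) : ℝ) = lam ^ n + lam⁻¹ ^ n ∧
    (((A ^ (n+1)).trace : ℤ) : ℝ) = lam ^ (n+1) + lam⁻¹ ^ (n+1) := by
  have h0 : lam * lam⁻¹ = 1 := mul_inv_cancel₀ (by linarith)
  have hsq : A ^ 2 = (A.trace : ℤ) • A - 1 := by
    rw [Matrix.det_fin_two] at hA
    rw [pow_two]
    ext i j
    fin_cases i <;> fin_cases j <;>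
      simp [Matrix.mul_apply, Fin.sum_univ_two, Matrix.trace_fin_two, -zsmul_eq_mul] <;> linarith
  induction n with
  | zero => simp [Matrix.trace_fin_two, htr]; norm_num
  | succ n ih =>
    refine ⟨ih.2, ?_⟩
    have   : A ^ (n+1+1) = (A.trace : ℤ) • A ^ (n+1) - A ^ n := by
      rw [add_assoc, pow_add, hsq, mul_sub, mul_smul_comm, ← pow_succ, mul_one]
    rw [this, Matrix.trace_sub, Matrix.trace_smul]
    push_cast [smul_eq_mul]
    rw [ih.1, ih.2, Matrix.trace_fin_two]
    push_cast
    rw [htr]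
    generalize lam⁻¹ = m at *
    linear_combination (lam ^ n + m ^ n) * h0

/-- `Per_n^-(f_A) = λ^n + λ^{-n} + 2`. -/
theorem card_antipodal_periodic_points_torus
    (A : Matrix.SpecialLinearGroup (Fin 2) ℤ)
    (lam : ℝ) (hlam : 1 < lam)
    -- the eigenvalues of A are lam and lam⁻¹, i.e. tr A = lam + lam⁻¹ (det A = 1)
    (htr : ((A.1 0 0 : ℤ) : ℝ) + ((A.1 1 1 : ℤ) : ℝ) = lam + lam⁻¹)
    (fA : Torus ≃ₜ Torus)
    (hfA : ∀ v : ℝ × ℝ, fA (torusMk v) = torusMk (matAct A v)) :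
    ∀ n : ℕ, 1 ≤ n →
      (Nat.card {x : Torus | fA^[n] x = -x} : ℝ) = lam ^ n + lam⁻¹ ^ n + 2 := by
  intro n _
  have hf : ∀ x : Torus, fA x = (A.1 0 0 • x.1 + A.1 0 1 • x.2, A.1 1 0 • x.1 + A.1 1 1 • x.2) := by
    rintro ⟨x, y⟩
    induction x using QuotientAddGroup.induction_on with | H x => ?_
    induction y using QuotientAddGroup.induction_on with | H y => ?_
    refine (hfA (x, y)).trans ?_
    simp only [torusMk, matAct, AddCircle.coe_add, ← zsmul_eq_mul, AddCircle.coe_zsmul]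
  have hit : ∀ (n : ℕ) (x : Torus), fA^[n] x = ((A.1 ^ n) 0 0 • x.1 + (A.1 ^ n) 0 1 • x.2,
      (A.1 ^ n) 1 0 • x.1 + (A.1 ^ n) 1 1 • x.2) := by
    intro n
    induction n with
    | zero => intro x; simp
    | succ n ih =>
      intro x
      rw [Function.iterate_succ_apply', ih, hf, pow_succ']
      simp only [Matrix.mul_apply, Fin.sum_univ_two]
      ext <;> simp only <;> module
  have ht := (trace_pow_aux A.1 A.2 lam hlam htr n).1
  have hdet : (A.1 ^ n + 1).det = (A.1 ^ n).trace + 2 := by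
    have h : (A.1 ^ n).det = 1 := by rw [Matrix.det_pow, A.2, one_pow]
    rw [Matrix.det_fin_two] at h
    rw [Matrix.det_fin_two, Matrix.trace_fin_two]
    simp
    linarith
  have hposR : (0:ℝ) < (((A.1 ^ n + 1).det : ℤ) : ℝ) := by
    rw [hdet]; push_cast; rw [ht]
    positivity
  have hpos : 0 < (A.1 ^ n + 1).det := by exact_mod_cast hposR
  have hset : {x : Torus | fA^[n] x = -x} = {x : Torus |
      (A.1 ^ n + 1) 0 0 • x.1 + (A.1 ^ n + 1) 0 1 • x.2 = 0 ∧
      (A.1 ^ n + 1) 1 0 • x.1 + (A.1 ^ n + 1) 1 1 • x.2 = 0} := by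
    ext x
    simp only [Set.mem_ofPred_eq]
    rw [hit, Prod.ext_iff, ← sub_eq_zero, ← sub_eq_zero (a := Prod.snd _)]
    simp only [Prod.fst_neg, Prod.snd_neg, sub_neg_eq_add, Matrix.add_apply, add_smul]
    simp only [Matrix.one_apply_eq, one_smul, Matrix.one_apply_ne zero_ne_one,
      Matrix.one_apply_ne one_ne_zero, zero_smul, add_zero]
    rw [add_right_comm, add_assoc (_ • x.1)  (_ • x.2) x.2]
  rw [hset, card_ker _ hpos.ne', Nat.cast_natAbs, abs_of_pos hpos, hdet]
  push_cast
  rw [ht]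
end

section
/- For every n ≥ 1, Per_n(g_A) = Per_n(f_A)/2 + Per_n^−(f_A)/2 = λ^n + λ^{−n}. -/
open Matrix

theorem aux_two_to_one {G S : Type} [AddCommGroup G] (π : G → S) (hs : Function.Surjective π)
    (hπ : ∀ x y, π x = π y ↔ (x = y ∨ x = -y)) (h : G → G) (hn : ∀ x, h (-x) = -h x)
    (g : S → S) (hg : ∀ x, g (π x) = π (h x))
    (fP : {x | h x = x}.Finite) (fQ : {x | h x = -x}.Finite) :
    Nat.card {x | h x = x} + Nat.card {x | h x = -x} = 2 * Nat.card {y | g y = y} := by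
  classical
  have hF : {y | g y = y} = π '' ({x | h x = x} ∪ {x | h x = -x}) := by
    ext y
    constructor
    · intro hy
      obtain ⟨x, rfl⟩ := hs y
      refine ⟨x, ?_, rfl⟩
      have : g (π x) = π x := hy
      rw [hg, hπ] at this
      exact this
    · rintro ⟨x, hx, rfl⟩
      show g (π x) = π x
      rw [hg, hπ]
      exact hx
  have fF : {y | g y = y}.Finite := by rw [hF]; exact (fP.union fQ).image _
  simp only [Nat.card_coe_set_eq]
  rw [Set.ncard_eq_toFinset_card _ fP, Set.ncard_eq_toFinset_card _ fQ,
    Set.ncard_eq_toFinset_card _ fF]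
  rw [Finset.card_eq_sum_card_fiberwise (f := π) (s := fP.toFinset) (t := fF.toFinset),
    Finset.card_eq_sum_card_fiberwise (f := π) (s := fQ.toFinset) (t := fF.toFinset),
    ← Finset.sum_add_distrib, mul_comm, ← smul_eq_mul, ← Finset.sum_const]
  · refine Finset.sum_congr rfl ?_
    intro y hy
    rw [Set.Finite.mem_toFinset] at hy
    obtain ⟨x, rfl⟩ := hs y
    have hx : h x = x ∨ h x = -x := by
      have : g (π x) = π x := hy
      rwa [hg, hπ] at this
    by_cases hxx : x = -x
    · have e1 : ({a ∈ fP.toFinset | π a = π x} : Finset G) = {x} := by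
        ext a
        simp only [Finset.mem_filter, Set.Finite.mem_toFinset, Set.mem_ofPred_eq,
          Finset.mem_singleton, hπ]
        constructor
        · rintro ⟨-, h1 | h1⟩
          · exact h1
          · rw [h1]; exact hxx.symm
        · rintro rfl
          refine ⟨?_, Or.inl rfl⟩
          rcases hx with hx | hx
          · exact hx
          · rw [hx]; exact hxx.symm
      have e2 : ({a ∈ fQ.toFinset | π a = π x} : Finset G) = {x} := by
        ext a
        simp only [Finset.mem_filter, Set.Finite.mem_toFinset, Set.mem_ofPred_eq,
          Finset.mem_singleton, hπ]
        constructor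
        · rintro ⟨-, h1 | h1⟩
          · exact h1
          · rw [h1]; exact hxx.symm
        · rintro rfl
          refine ⟨?_, Or.inl rfl⟩
          rcases hx with hx | hx
          · rw [hx]; exact hxx
          · exact hx
      rw [e1, e2]; rfl
    · rcases hx with hx | hx
      · have e1 : ({a ∈ fP.toFinset | π a = π x} : Finset G) = {x, -x} := by
          ext a
          simp only [Finset.mem_filter, Set.Finite.mem_toFinset, Set.mem_ofPred_eq,
            Finset.mem_singleton, Finset.mem_insert, hπ]
          constructor
          · rintro ⟨-, h1⟩; exact h1
          · rintro (rfl | rfl)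
            · exact ⟨hx, Or.inl rfl⟩
            · exact ⟨by rw [hn, hx], Or.inr rfl⟩
        have e2 : ({a ∈ fQ.toFinset | π a = π x} : Finset G) = ∅ := by
          ext a
          simp only [Finset.mem_filter, Set.Finite.mem_toFinset, Set.mem_ofPred_eq,
            hπ, Finset.notMem_empty, iff_false]
          rintro ⟨h2, rfl | rfl⟩
          · exact hxx (hx.symm.trans h2)
          · rw [hn, hx, neg_neg] at h2; exact hxx h2.symm
        rw [e1, e2, Finset.card_pair hxx]; rfl
      · have e1 : ({a ∈ fQ.toFinset | π a = π x} : Finset G) = {x, -x} := by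
          ext a
          simp only [Finset.mem_filter, Set.Finite.mem_toFinset, Set.mem_ofPred_eq,
            Finset.mem_singleton, Finset.mem_insert, hπ]
          constructor
          · rintro ⟨-, h1⟩; exact h1
          · rintro (rfl | rfl)
            · exact ⟨hx, Or.inl rfl⟩
            · exact ⟨by rw [hn, hx], Or.inr rfl⟩
        have e2 : ({a ∈ fP.toFinset | π a = π x} : Finset G) = ∅ := by
          ext a
          simp only [Finset.mem_filter, Set.Finite.mem_toFinset, Set.mem_ofPred_eq,
            hπ, Finset.notMem_empty, iff_false]
          rintro ⟨h2, rfl | rfl⟩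
          · exact hxx (h2.symm.trans hx)
          · rw [hn, hx, neg_neg] at h2; exact hxx h2
        rw [e1, e2, Finset.card_pair hxx]; rfl
  · intro x hx
    simp only [Set.Finite.coe_toFinset, Set.mem_ofPred_eq] at hx ⊢
    rw [hg, hπ]; exact Or.inr hx
  · intro x hx
    simp only [Set.Finite.coe_toFinset, Set.mem_ofPred_eq] at hx ⊢
    rw [hg, hπ]; exact Or.inl hx

/-- action of an integer matrix on the torus -/
noncomputable def torAct (B : Matrix (Fin 2) (Fin 2) ℤ) (x : Torus) : Torus :=
  (B 0 0 • x.1 + B 0 1 • x.2, B 1 0 • x.1 + B 1 1 • x.2)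

theorem aux_index (B : Matrix (Fin 2) (Fin 2) ℤ) (hB : B.det ≠ 0) :
    Nat.card ((Fin 2 → ℤ) ⧸ LinearMap.range (Matrix.toLin' B)) = B.det.natAbs := by
  have hinj : Function.Injective (Matrix.toLin' B) := by
    rw [← LinearMap.ker_eq_bot]
    by_contra hne
    exact hB ((LinearMap.det_toLin' B).symm.trans (LinearMap.det_eq_zero_iff_ker_ne_bot.2 hne))
  have := Submodule.natAbs_det_equiv (LinearMap.range (Matrix.toLin' B))
    (LinearEquiv.ofInjective _ hinj)
  rw [← this, ← LinearMap.det_toLin' B]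
  congr 2

noncomputable def auxPhi (B : Matrix (Fin 2) (Fin 2) ℤ) : (Fin 2 → ℤ) →+ Torus where
  toFun m := torusMk (((B 1 1 : ℝ) * m 0 - B 0 1 * m 1) / B.det,
    (-(B 1 0 : ℝ) * m 0 + B 0 0 * m 1) / B.det)
  map_zero' := by simp [torusMk]
  map_add' m k := by
    simp only [torusMk, Prod.mk_add_mk, ← AddCircle.coe_add, Pi.add_apply, Int.cast_add]
    congr 2 <;> ring

theorem torusMk_eq_zero (v : ℝ × ℝ) : torusMk v = 0 ↔ (∃ n : ℤ, n = v.1) ∧ ∃ n : ℤ, n = v.2 := by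
  simp [torusMk, Prod.ext_iff, AddSubgroup.mem_zmultiples_iff]

theorem torusMk_surj : Function.Surjective torusMk := by
  rintro ⟨x, y⟩
  obtain ⟨x, rfl⟩ := QuotientAddGroup.mk_surjective x
  obtain ⟨y, rfl⟩ := QuotientAddGroup.mk_surjective y
  exact ⟨(x, y), rfl⟩

theorem torAct_mk (B : Matrix (Fin 2) (Fin 2) ℤ) (v : ℝ × ℝ) :
    torAct B (torusMk v) = torusMk (B 0 0 * v.1 + B 0 1 * v.2, B 1 0 * v.1 + B 1 1 * v.2) := by
  simp [torAct, torusMk, ← zsmul_eq_mul, AddCircle.coe_zsmul]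

theorem aux_ker (B : Matrix (Fin 2) (Fin 2) ℤ) (hB : B.det ≠ 0) :
    Nat.card {x : Torus | torAct B x = 0} = B.det.natAbs := by
  have hB' : (B.det : ℝ) ≠ 0 := by exact_mod_cast hB
  have hd : (B.det : ℝ) = B 0 0 * B 1 1 - B 0 1 * B 1 0 := by
    rw [Matrix.det_fin_two]; push_cast; ring
  have hker : (auxPhi B).ker = (LinearMap.range (Matrix.toLin' B)).toAddSubgroup := by
    ext m
    rw [AddMonoidHom.mem_ker]
    show torusMk _ = 0 ↔ m ∈ LinearMap.range (Matrix.toLin' B)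
    rw [torusMk_eq_zero]
    constructor
    · rintro ⟨⟨p, hp⟩, ⟨q, hq⟩⟩
      rw [eq_div_iff hB'] at hp hq
      refine ⟨![p, q], ?_⟩
      ext i
      have key : ((B.det : ℝ)) * ((B *ᵥ ![p, q]) i : ℤ) = B.det * m i := by
        fin_cases i
        · simp [Matrix.mulVec, dotProduct, Fin.sum_univ_two, -mul_eq_mul_left_iff]
          rw [hd] at *
          linear_combination (B 0 0 : ℝ) * hp + (B 0 1 : ℝ) * hq
        · simp [Matrix.mulVec, dotProduct, Fin.sum_univ_two, -mul_eq_mul_left_iff]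
          rw [hd] at *
          linear_combination (B 1 0 : ℝ) * hp + (B 1 1 : ℝ) * hq
      have := mul_left_cancel₀ hB' key
      rw [Matrix.toLin'_apply]
      exact_mod_cast this
    · rintro ⟨k, rfl⟩
      refine ⟨⟨k 0, ?_⟩, ⟨k 1, ?_⟩⟩
      · rw [eq_div_iff hB', hd]
        simp [Matrix.mulVec, dotProduct, Fin.sum_univ_two]
        ring
      · rw [eq_div_iff hB', hd]
        simp [Matrix.mulVec, dotProduct, Fin.sum_univ_two]
        ring
  have hrange : ((auxPhi B).range : Set Torus) = {x : Torus | torAct B x = 0} := by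
    ext x
    constructor
    · rintro ⟨m, rfl⟩
      show torAct B (torusMk _) = 0
      rw [torAct_mk, torusMk_eq_zero]
      refine ⟨⟨m 0, ?_⟩, ⟨m 1, ?_⟩⟩
      · simp only; field_simp; rw [hd]; ring
      · simp only; field_simp; rw [hd]; ring
    · intro hx
      obtain ⟨v, rfl⟩ := torusMk_surj x
      have hx : torAct B (torusMk v) = 0 := hx
      rw [torAct_mk, torusMk_eq_zero] at hx
      obtain ⟨⟨p, hp⟩, ⟨q, hq⟩⟩ := hx
      refine ⟨![p, q], ?_⟩
      show torusMk _ = _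
      congr 1
      simp only at hp hq
      ext
      · simp
        rw [div_eq_iff hB', hp, hq, hd]; ring
      · simp
        rw [div_eq_iff hB', hp, hq, hd]; ring
  rw [← aux_index B hB, ← hrange]
  refine (Nat.card_congr (QuotientAddGroup.quotientKerEquivRange (auxPhi B)).toEquiv).symm.trans ?_
  rw [hker]
  rfl

theorem torAct_mul (B C : Matrix (Fin 2) (Fin 2) ℤ) (x : Torus) :
    torAct B (torAct C x) = torAct (B * C) x := by
  simp only [torAct, Matrix.mul_apply, Fin.sum_univ_two]
  ext <;> simp only <;> module

theorem torAct_one (x : Torus) : torAct 1 x = x := by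
  simp [torAct]

theorem torAct_neg (B : Matrix (Fin 2) (Fin 2) ℤ) (x : Torus) : torAct B (-x) = - torAct B x := by
  simp only [torAct]
  ext <;> simp only [Prod.fst_neg, Prod.snd_neg] <;> module

theorem torAct_sub_mat (B C : Matrix (Fin 2) (Fin 2) ℤ) (x : Torus) :
    torAct (B - C) x = torAct B x - torAct C x := by
  simp only [torAct, Matrix.sub_apply]
  ext <;> simp only [Prod.fst_sub, Prod.snd_sub] <;> module

theorem torAct_add_mat (B C : Matrix (Fin 2) (Fin 2) ℤ) (x : Torus) :
    torAct (B + C) x = torAct B x + torAct C x := by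
  simp only [torAct, Matrix.add_apply]
  ext <;> simp only [Prod.fst_add, Prod.snd_add] <;> module

theorem aux_trace (A : Matrix (Fin 2) (Fin 2) ℤ) (hA : A.det = 1) (lam : ℝ) (hl : lam ≠ 0)
    (htr : ((A 0 0 : ℤ) : ℝ) + ((A 1 1 : ℤ) : ℝ) = lam + lam⁻¹) (n : ℕ) :
    (((A ^ n) 0 0 + (A ^ n) 1 1 : ℤ) : ℝ) = lam ^ n + lam⁻¹ ^ n := by
  have hCH : A ^ 2 = ((A 0 0 + A 1 1 : ℤ) • A : Matrix (Fin 2) (Fin 2) ℤ) - 1 := by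
    rw [Matrix.det_fin_two] at hA
    ext i j
    fin_cases i <;> fin_cases j <;>
      simp [pow_two, Matrix.mul_apply, Fin.sum_univ_two, -zsmul_eq_mul, Matrix.smul_apply] <;>
      linarith
  have hrec (n : ℕ) : A ^ (n + 2) = (A 0 0 + A 1 1 : ℤ) • A ^ (n + 1) - A ^ n := by
    rw [pow_add, hCH, mul_sub, mul_one, Matrix.mul_smul, ← pow_succ]
  induction n using Nat.twoStepInduction with
  | zero => simp; norm_num
  | one => simpa using htr
  | more n h1 h2 =>
    rw [hrec]
    simp only [Matrix.sub_apply, Matrix.smul_apply, smul_eq_mul]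
    push_cast at h1 h2 ⊢
    have hi : lam * lam⁻¹ = 1 := mul_inv_cancel₀ hl
    rw [htr]
    linear_combination (lam + lam⁻¹) * h2 - h1 + (lam ^ n + lam⁻¹ ^ n) * hi

/-- `Per_n(g_A) = Per_n(f_A)/2 + Per_n^-(f_A)/2 = λ^n + λ^{-n}`. -/
theorem card_periodic_points_quotient
    (A : Matrix.SpecialLinearGroup (Fin 2) ℤ)
    (lam : ℝ) (hlam : 1 < lam)
    (htr : ((A.1 0 0 : ℤ) : ℝ) + ((A.1 1 1 : ℤ) : ℝ) = lam + lam⁻¹)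
    (fA : Torus ≃ₜ Torus)
    (hfA : ∀ v : ℝ × ℝ, fA (torusMk v) = torusMk (matAct A v))
    -- the sphere as the quotient of the torus by the antipodal identification
    (S2 : Type) [MetricSpace S2] [CompactSpace S2]
    (π : Torus → S2) (hπcont : Continuous π) (hπsurj : Function.Surjective π)
    (hπ : ∀ x y : Torus, π x = π y ↔ (x = y ∨ x = -y))
    (gA : S2 ≃ₜ S2) (hgA : ∀ x : Torus, gA (π x) = π (fA x)) :
    ∀ n : ℕ, 1 ≤ n →
      (Nat.card {y : S2 | gA^[n] y = y} : ℝ) =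
          (Nat.card {x : Torus | fA^[n] x = x} : ℝ) / 2
            + (Nat.card {x : Torus | fA^[n] x = -x} : ℝ) / 2 ∧
      (Nat.card {y : S2 | gA^[n] y = y} : ℝ) = lam ^ n + lam⁻¹ ^ n := by
  intro n hn
  have hfT : ∀ x, fA x = torAct A.1 x := by
    intro x
    obtain ⟨v, rfl⟩ := torusMk_surj x
    rw [hfA, torAct_mk]; rfl
  have hfn : ∀ (n : ℕ) x, fA^[n] x = torAct (A.1 ^ n) x := by
    intro n
    induction n with
    | zero => intro x; simp [torAct_one]
    | succ n ih => intro x; rw [Function.iterate_succ_apply', ih, hfT, torAct_mul, ← pow_succ']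
  have hgn : ∀ (n : ℕ) x, gA^[n] (π x) = π (fA^[n] x) := by
    intro n
    induction n with
    | zero => intro x; rfl
    | succ n ih =>
      intro x; rw [Function.iterate_succ_apply', ih, hgA, Function.iterate_succ_apply']
  have hl0 : lam ≠ 0 := by positivity
  have htrn := aux_trace A.1 A.2 lam hl0 htr n
  have hdetn : (A.1 ^ n).det = 1 := by rw [Matrix.det_pow, A.2, one_pow]
  set C := A.1 ^ n with hC
  have hgt : (2 : ℝ) < lam ^ n + lam⁻¹ ^ n := by
    have h1 : 1 < lam ^ n := one_lt_pow₀ hlam (by omega)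
    rw [inv_pow]
    have h2 : 0 < lam ^ n := by positivity
    have h3 : lam ^ n * (lam ^ n)⁻¹ = 1 := mul_inv_cancel₀ h2.ne'
    have h4 : 0 < (lam ^ n)⁻¹ := by positivity
    nlinarith [mul_pos h4 (mul_pos (sub_pos.2 h1) (sub_pos.2 h1))]
  have htZ : 2 < C 0 0 + C 1 1 := by
    rw [← htrn] at hgt
    exact_mod_cast hgt
  have hdm : (C - 1).det = 2 - (C 0 0 + C 1 1) := by
    rw [Matrix.det_fin_two] at hdetn ⊢
    simp
    linarith
  have hdp : (C + 1).det = 2 + (C 0 0 + C 1 1) := by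
    rw [Matrix.det_fin_two] at hdetn ⊢
    simp
    linarith
  have hP : {x : Torus | fA^[n] x = x} = {x | torAct (C - 1) x = 0} := by
    ext x
    simp only [Set.mem_ofPred_eq, hfn, torAct_sub_mat, torAct_one, sub_eq_zero, ← hC]
  have hQ : {x : Torus | fA^[n] x = -x} = {x | torAct (C + 1) x = 0} := by
    ext x
    simp only [Set.mem_ofPred_eq, hfn, torAct_add_mat, torAct_one, ← hC]
    exact eq_neg_iff_add_eq_zero
  have cP : Nat.card {x : Torus | fA^[n] x = x} = (C - 1).det.natAbs := by
    rw [hP]; exact aux_ker _ (by omega)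
  have cQ : Nat.card {x : Torus | fA^[n] x = -x} = (C + 1).det.natAbs := by
    rw [hQ]; exact aux_ker _ (by omega)
  have fP : {x : Torus | fA^[n] x = x}.Finite :=
    Set.finite_coe_iff.1 (Nat.finite_of_card_ne_zero (by rw [cP]; omega))
  have fQ : {x : Torus | fA^[n] x = -x}.Finite :=
    Set.finite_coe_iff.1 (Nat.finite_of_card_ne_zero (by rw [cQ]; omega))
  have key := aux_two_to_one π hπsurj hπ (fA^[n]) (fun x => by rw [hfn, hfn, torAct_neg])
    (gA^[n]) (hgn n) fP fQ
  have hF : ((Nat.card {y : S2 | gA^[n] y = y} : ℤ)) = C 0 0 + C 1 1 := by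
    omega
  constructor
  · have : (Nat.card {x : Torus | fA^[n] x = x} : ℝ) + Nat.card {x : Torus | fA^[n] x = -x}
        = 2 * Nat.card {y : S2 | gA^[n] y = y} := by exact_mod_cast key
    linarith
  · rw [← htrn, ← hF]; simp
end

section
/- The limit lim_{n→∞} (log Per_n(g_A))/n exists and equals log λ. -/
open Matrix

lemma card_torus_ker (a b c d : ℤ) (hD : a * d - b * c ≠ 0) :
    Nat.card {x : Torus | a • x.1 + b • x.2 = 0 ∧ c • x.1 + d • x.2 = 0}
      = (a * d - b * c).natAbs := by
  have hDR : (a * d - b * c : ℝ) ≠ 0 := by exact_mod_cast hD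
  set L : (Fin 2 → ℤ) →ₗ[ℤ] (Fin 2 → ℤ) := Matrix.toLin' !![a, b; c, d] with hL
  have hdet : LinearMap.det L = a * d - b * c := by
    rw [hL, LinearMap.det_toLin', Matrix.det_fin_two_of]
  have hinj : Function.Injective L := by
    rw [← LinearMap.ker_eq_bot]
    by_contra h
    exact hD (hdet ▸ LinearMap.det_eq_zero_iff_ker_ne_bot.2 h)
  have h1 := Submodule.natAbs_det_equiv (LinearMap.range L) (LinearEquiv.ofInjective L hinj)
  have h2 : (LinearMap.range L).subtype ∘ₗ
      ((LinearEquiv.ofInjective L hinj : (Fin 2 → ℤ) ≃ₗ[ℤ] _) : (Fin 2 → ℤ) →ₗ[ℤ] _) = L := by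
    ext; rfl
  have h3 : (LinearMap.range L).toAddSubgroup.index = (a * d - b * c).natAbs := by
    rw [← hdet]
    refine Eq.trans ?_ (h1.symm.trans ?_)
    · rfl
    · congr 2
  let φ : (Fin 2 → ℤ) →+ Torus :=
    { toFun := fun m => ((((d * m 0 - b * m 1) / (a * d - b * c) : ℝ) : AddCircle (1:ℝ)),
        ((((a * m 1 - c * m 0) / (a * d - b * c) : ℝ)) : AddCircle (1:ℝ)))
      map_zero' := by simp
      map_add' := by
        intro m k
        ext
        · simp only [Prod.fst_add, ← AddCircle.coe_add]
          congr 1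
          simp only [Pi.add_apply]; push_cast; ring
        · simp only [Prod.snd_add, ← AddCircle.coe_add]
          congr 1
          simp only [Pi.add_apply]; push_cast; ring }
  have hker : φ.ker = (LinearMap.range L).toAddSubgroup := by
    ext m
    rw [AddMonoidHom.mem_ker]
    simp only [φ, AddMonoidHom.coe_mk, ZeroHom.coe_mk, Prod.mk_eq_zero, AddCircle.coe_eq_zero_iff,
      Submodule.mem_toAddSubgroup, LinearMap.mem_range, zsmul_eq_mul, mul_one]
    constructor
    · rintro ⟨⟨p, hp⟩, ⟨q, hq⟩⟩
      refine ⟨![p, q], ?_⟩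
      rw [eq_div_iff hDR] at hp hq
      ext i
      fin_cases i
      · simp [hL, Matrix.toLin'_apply, Matrix.mulVec, dotProduct, Fin.sum_univ_two]
        have : ((a * p + b * q : ℤ) : ℝ) * (a * d - b * c) = (m 0 : ℤ) * (a * d - b * c) := by
          push_cast; linear_combination a * hp + b * hq
        exact_mod_cast mul_right_cancel₀ hDR this
      · simp [hL, Matrix.toLin'_apply, Matrix.mulVec, dotProduct, Fin.sum_univ_two]
        have : ((c * p + d * q : ℤ) : ℝ) * (a * d - b * c) = (m 1 : ℤ) * (a * d - b * c) := by
          push_cast; linear_combination c * hp + d * hq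
        exact_mod_cast mul_right_cancel₀ hDR this
    · rintro ⟨k, rfl⟩
      refine ⟨⟨k 0, ?_⟩, ⟨k 1, ?_⟩⟩
      · rw [eq_div_iff hDR]
        simp [hL, Matrix.toLin'_apply, Matrix.mulVec, dotProduct, Fin.sum_univ_two]
        ring
      · rw [eq_div_iff hDR]
        simp [hL, Matrix.toLin'_apply, Matrix.mulVec, dotProduct, Fin.sum_univ_two]
        ring
  have hrange : (φ.range : Set Torus) =
      {x : Torus | a • x.1 + b • x.2 = 0 ∧ c • x.1 + d • x.2 = 0} := by
    ext ⟨x, y⟩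
    simp only [AddMonoidHom.coe_range, Set.mem_range, Set.mem_ofPred_eq]
    induction x using QuotientAddGroup.induction_on with | H x => ?_
    induction y using QuotientAddGroup.induction_on with | H y => ?_
    constructor
    · rintro ⟨m, hm⟩
      simp only [φ, AddMonoidHom.coe_mk, ZeroHom.coe_mk, Prod.mk.injEq] at hm
      rw [← hm.1, ← hm.2]
      simp only [← AddCircle.coe_zsmul, ← AddCircle.coe_add, AddCircle.coe_eq_zero_iff,
        zsmul_eq_mul, mul_one]
      refine ⟨⟨m 0, ?_⟩, ⟨m 1, ?_⟩⟩
      · rw [mul_div_assoc', mul_div_assoc', ← add_div, eq_div_iff hDR]; ring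
      · rw [mul_div_assoc', mul_div_assoc', ← add_div, eq_div_iff hDR]; ring
    · intro h
      change a • ((x : ℝ) : AddCircle (1:ℝ)) + b • ((y : ℝ) : AddCircle (1:ℝ)) = 0 ∧
        c • ((x : ℝ) : AddCircle (1:ℝ)) + d • ((y : ℝ) : AddCircle (1:ℝ)) = 0 at h
      simp only [← AddCircle.coe_zsmul, ← AddCircle.coe_add, AddCircle.coe_eq_zero_iff,
        zsmul_eq_mul, mul_one] at h
      obtain ⟨⟨p, hp⟩, ⟨q, hq⟩⟩ := h
      refine ⟨![p, q], ?_⟩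
      simp only [φ, AddMonoidHom.coe_mk, ZeroHom.coe_mk]
      refine Prod.ext ?_ ?_
      · change ((_ : ℝ) : AddCircle (1:ℝ)) = ((x : ℝ) : AddCircle (1:ℝ))
        congr 1
        rw [div_eq_iff hDR]
        simp only [Matrix.cons_val_zero, Matrix.cons_val_one, hp, hq]
        ring
      · change ((_ : ℝ) : AddCircle (1:ℝ)) = ((y : ℝ) : AddCircle (1:ℝ))
        congr 1
        rw [div_eq_iff hDR]
        simp only [Matrix.cons_val_zero, Matrix.cons_val_one, hp, hq]
        ring
  rw [← hrange, ← h3, ← hker, AddSubgroup.index_ker]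
  rfl

lemma torus_iter (A : Matrix.SpecialLinearGroup (Fin 2) ℤ) (fA : Torus → Torus)
    (hfA : ∀ v : ℝ × ℝ, fA (torusMk v) = torusMk (matAct A v)) (n : ℕ) (x : Torus) :
    fA^[n] x = ((A.1 ^ n) 0 0 • x.1 + (A.1 ^ n) 0 1 • x.2,
      (A.1 ^ n) 1 0 • x.1 + (A.1 ^ n) 1 1 • x.2) := by
  have h1 : ∀ x : Torus, fA x = (A.1 0 0 • x.1 + A.1 0 1 • x.2,
      A.1 1 0 • x.1 + A.1 1 1 • x.2) := by
    rintro ⟨x, y⟩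
    induction x using QuotientAddGroup.induction_on with | H x => ?_
    induction y using QuotientAddGroup.induction_on with | H y => ?_
    have := hfA (x, y)
    simp only [torusMk, matAct, AddCircle.coe_add, ← zsmul_eq_mul, AddCircle.coe_zsmul] at this
    exact this
  induction n with
  | zero => ext <;> simp
  | succ n ih =>
    rw [Function.iterate_succ_apply', ih, h1, pow_succ']
    simp only [Matrix.mul_apply, Fin.sum_univ_two]
    ext
    · simp only; module
    · simp only; module

lemma trace_pow_sl (A : Matrix.SpecialLinearGroup (Fin 2) ℤ) (lam : ℝ) (hlam : 1 < lam)
    (htr : ((A.1 0 0 : ℤ) : ℝ) + ((A.1 1 1 : ℤ) : ℝ) = lam + lam⁻¹) (n : ℕ) :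
    (((A.1 ^ n) 0 0 : ℤ) : ℝ) + (((A.1 ^ n) 1 1 : ℤ) : ℝ) = lam ^ n + (lam⁻¹) ^ n := by
  have hdet : A.1 0 0 * A.1 1 1 - A.1 0 1 * A.1 1 0 = 1 := by
    rw [← Matrix.det_fin_two]; exact A.2
  have hl : lam * lam⁻¹ = 1 := mul_inv_cancel₀ (by linarith)
  have key : (((A.1 ^ n) 0 0 : ℤ) : ℝ) + (((A.1 ^ n) 1 1 : ℤ) : ℝ) = lam ^ n + (lam⁻¹) ^ n ∧
     (((A.1 ^ (n+1)) 0 0 : ℤ) : ℝ) + (((A.1 ^ (n+1)) 1 1 : ℤ) : ℝ)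
        = lam ^ (n+1) + (lam⁻¹) ^ (n+1) := by
    induction n with
    | zero => 
      refine ⟨?_, ?_⟩
      · norm_num
      · simpa using htr
    | succ n ih =>
      refine ⟨ih.2, ?_⟩
      obtain ⟨i1, i2⟩ := ih
      have e : (A.1 ^ (n+1+1)) 0 0 + (A.1 ^ (n+1+1)) 1 1 =
          (A.1 0 0 + A.1 1 1) * ((A.1 ^ (n+1)) 0 0 + (A.1 ^ (n+1)) 1 1)
          - ((A.1 ^ n) 0 0 + (A.1 ^ n) 1 1) := by
        simp only [pow_succ', Matrix.mul_apply, Fin.sum_univ_two]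
        linear_combination (-((A.1 ^ n) 0 0 + (A.1 ^ n) 1 1)) * hdet
      have e' : (((A.1 ^ (n+1+1)) 0 0 : ℤ) : ℝ) + (((A.1 ^ (n+1+1)) 1 1 : ℤ) : ℝ) =
          (((A.1 0 0 : ℤ) : ℝ) + ((A.1 1 1 : ℤ) : ℝ)) *
            ((((A.1 ^ (n+1)) 0 0 : ℤ) : ℝ) + (((A.1 ^ (n+1)) 1 1 : ℤ) : ℝ))
          - ((((A.1 ^ n) 0 0 : ℤ) : ℝ) + (((A.1 ^ n) 1 1 : ℤ) : ℝ)) := by exact_mod_cast e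
      rw [e', htr, i1, i2]
      linear_combination (lam ^ n + lam⁻¹ ^ n) * hl
  exact key.1

lemma card_fix (A : Matrix.SpecialLinearGroup (Fin 2) ℤ) (lam : ℝ) (hlam : 1 < lam)
    (htr : ((A.1 0 0 : ℤ) : ℝ) + ((A.1 1 1 : ℤ) : ℝ) = lam + lam⁻¹) (fA : Torus → Torus)
    (hfA : ∀ v : ℝ × ℝ, fA (torusMk v) = torusMk (matAct A v)) (n : ℕ) (hn : n ≠ 0)
    (s : ℤ) (hs : s = 1 ∨ s = -1) :
    {x : Torus | fA^[n] x = s • x}.Finite ∧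
    ({x : Torus | fA^[n] x = s • x}.ncard : ℝ) = lam ^ n + lam⁻¹ ^ n - 2 * s := by
  have hdet : (A.1 ^ n) 0 0 * (A.1 ^ n) 1 1 - (A.1 ^ n) 0 1 * (A.1 ^ n) 1 0 = 1 := by
    rw [← Matrix.det_fin_two, Matrix.det_pow, A.2, one_pow]
  have ht := trace_pow_sl A lam hlam htr n
  set p := (A.1 ^ n) 0 0
  set q := (A.1 ^ n) 0 1
  set r := (A.1 ^ n) 1 0
  set t := (A.1 ^ n) 1 1
  have hpos : 0 < lam ^ n + lam⁻¹ ^ n - 2 * s := by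
    have h1 : 1 < lam ^ n := one_lt_pow₀ hlam hn
    have h2 : lam ^ n * lam⁻¹ ^ n = 1 := by
      rw [← mul_pow, mul_inv_cancel₀ (by linarith), one_pow]
    have h3 : 0 < lam⁻¹ ^ n := by positivity
    rcases hs with rfl | rfl
    · push_cast
      have : lam ^ n * (lam ^ n + lam⁻¹ ^ n - 2 * 1) = (lam ^ n - 1)^2 := by
        linear_combination h2
      have h4 : 0 < (lam ^ n - 1)^2 := by nlinarith
      rw [← this] at h4
      exact pos_of_mul_pos_right h4 (by linarith)
    · push_cast; linarith
  have hss : s * s = 1 := by rcases hs with rfl | rfl <;> norm_num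
  have hDe : (p - s) * (t - s) - q * r = 2 - s * (p + t) := by
    linear_combination hdet + hss
  have habs : ((((p - s) * (t - s) - q * r).natAbs : ℕ) : ℝ) = lam ^ n + lam⁻¹ ^ n - 2 * s := by
    rw [hDe, Nat.cast_natAbs, Int.cast_abs]
    push_cast
    rw [ht]
    rcases hs with rfl | rfl
    · rw [abs_of_neg] <;> push_cast at * <;> linarith
    · rw [abs_of_pos] <;> push_cast at * <;> linarith
  have hD : (p - s) * (t - s) - q * r ≠ 0 := by
    intro h
    rw [h] at habs
    simp only [Int.natAbs_zero, Nat.cast_zero] at habs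
    linarith
  have hset : {x : Torus | fA^[n] x = s • x} =
      {x : Torus | (p - s) • x.1 + q • x.2 = 0 ∧ r • x.1 + (t - s) • x.2 = 0} := by
    ext x
    simp only [Set.mem_ofPred_eq]
    rw [torus_iter A fA hfA n x, Prod.ext_iff]
    refine and_congr ?_ ?_
    · rw [← sub_eq_zero]
      simp only [Prod.smul_fst]
      rw [show (p • x.1 + q • x.2 - s • x.1) = (p - s) • x.1 + q • x.2 by module]
    · rw [← sub_eq_zero]
      simp only [Prod.smul_snd]
      rw [show (r • x.1 + t • x.2 - s • x.2) = r • x.1 + (t - s) • x.2 by module]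
  have hc := card_torus_ker (p - s) q r (t - s) hD
  rw [hset]
  rw [Nat.card_coe_set_eq] at hc
  refine ⟨Set.finite_of_ncard_ne_zero ?_, ?_⟩
  · rw [hc]; exact Int.natAbs_ne_zero.2 hD
  · rw [hc, habs]

open Filter in
/-- `lim_{n→∞} (log Per_n(g_A))/n = log λ`. -/
theorem growth_rate_periodic_points_quotient
    (A : Matrix.SpecialLinearGroup (Fin 2) ℤ)
    (lam : ℝ) (hlam : 1 < lam)
    (htr : ((A.1 0 0 : ℤ) : ℝ) + ((A.1 1 1 : ℤ) : ℝ) = lam + lam⁻¹)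
    (fA : Torus ≃ₜ Torus)
    (hfA : ∀ v : ℝ × ℝ, fA (torusMk v) = torusMk (matAct A v))
    (S2 : Type) [MetricSpace S2] [CompactSpace S2]
    (π : Torus → S2) (hπcont : Continuous π) (hπsurj : Function.Surjective π)
    (hπ : ∀ x y : Torus, π x = π y ↔ (x = y ∨ x = -y))
    (gA : S2 ≃ₜ S2) (hgA : ∀ x : Torus, gA (π x) = π (fA x)) :
    Tendsto (fun n : ℕ => Real.log (Nat.card {y : S2 | gA^[n] y = y}) / n)
      atTop (nhds (Real.log lam)) := by
  have hiter : ∀ (n : ℕ) (x : Torus), gA^[n] (π x) = π (fA^[n] x) := by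
    intro n
    induction n with
    | zero => intro x; rfl
    | succ n ih => intro x; rw [Function.iterate_succ_apply, Function.iterate_succ_apply, hgA, ih]
  have hbd : ∀ n : ℕ, n ≠ 0 →
      lam ^ n - 2 ≤ 2 * (Nat.card {y : S2 | gA^[n] y = y} : ℝ) ∧
      (Nat.card {y : S2 | gA^[n] y = y} : ℝ) ≤ 4 * lam ^ n := by
    intro n hn
    obtain ⟨f1, c1⟩ := card_fix A lam hlam htr fA hfA n hn 1 (Or.inl rfl)
    obtain ⟨f2, c2⟩ := card_fix A lam hlam htr fA hfA n hn (-1) (Or.inr rfl)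
    set K1 := {x : Torus | fA^[n] x = (1:ℤ) • x} with hK1
    set K2 := {x : Torus | fA^[n] x = (-1:ℤ) • x} with hK2
    have hP : {y : S2 | gA^[n] y = y} = π '' (K1 ∪ K2) := by
      ext y
      obtain ⟨x, rfl⟩ := hπsurj y
      simp only [Set.mem_ofPred_eq, Set.mem_image, Set.mem_union, hK1, hK2, one_smul, neg_smul]
      constructor
      · intro h
        rw [hiter, hπ] at h
        exact ⟨x, h, rfl⟩
      · rintro ⟨z, hz, hzx⟩
        rw [← hzx, hiter, hπ]
        exact hz
    have hinv1 : lam⁻¹ ^ n ≤ 1 := pow_le_one₀ (by positivity) (inv_le_one_of_one_le₀ hlam.le)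
    have hinv0 : 0 < lam⁻¹ ^ n := by positivity
    have hl1 : 1 < lam ^ n := one_lt_pow₀ hlam hn
    rw [Nat.card_coe_set_eq, hP]
    have hfin : (K1 ∪ K2).Finite := f1.union f2
    constructor
    · have hle : K1.ncard ≤ 2 * (π '' (K1 ∪ K2)).ncard := by
        classical
        have h1 : K1.ncard ≤ 2 * (π '' K1).ncard := by
          rw [Set.ncard_eq_toFinset_card K1 f1, Set.ncard_eq_toFinset_card _ (f1.image π)]
          refine Finset.card_le_mul_card_image_of_maps_to (f := π) ?_ 2 ?_
          · intro x hx
            rw [Set.Finite.mem_toFinset] at hx ⊢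
            exact ⟨x, hx, rfl⟩
          · intro y hy
            obtain ⟨x, rfl⟩ := hπsurj y
            refine (Finset.card_le_card (t := {x, -x}) ?_).trans Finset.card_le_two
            intro z hz
            simp only [Finset.mem_filter] at hz
            simpa using (hπ z x).1 hz.2
        exact h1.trans (Nat.mul_le_mul_left 2
          (Set.ncard_le_ncard (Set.image_mono Set.subset_union_left) (hfin.image π)))
      have : (K1.ncard : ℝ) ≤ 2 * ((π '' (K1 ∪ K2)).ncard : ℝ) := by exact_mod_cast hle
      rw [c1] at this
      push_cast at this
      linarith
    · have hle : (π '' (K1 ∪ K2)).ncard ≤ K1.ncard + K2.ncard :=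
        (Set.ncard_image_le hfin).trans (Set.ncard_union_le _ _)
      have : ((π '' (K1 ∪ K2)).ncard : ℝ) ≤ K1.ncard + K2.ncard := by exact_mod_cast hle
      rw [c1, c2] at this
      push_cast at this
      linarith
  have hl0 : 0 < lam := by linarith
  have hlim : Tendsto (fun n : ℕ => Real.log 4 / (n : ℝ)) atTop (nhds 0) :=
    tendsto_const_div_atTop_nhds_zero_nat _
  have hlo : Tendsto (fun n : ℕ => Real.log lam - Real.log 4 / (n : ℝ)) atTop
      (nhds (Real.log lam)) := by simpa using hlim.const_sub (Real.log lam)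
  have hhi : Tendsto (fun n : ℕ => Real.log lam + Real.log 4 / (n : ℝ)) atTop
      (nhds (Real.log lam)) := by simpa using hlim.const_add (Real.log lam)
  have hev : ∀ᶠ n : ℕ in atTop, n ≠ 0 ∧ 4 ≤ lam ^ n :=
    (eventually_ne_atTop 0).and ((tendsto_pow_atTop_atTop_of_one_lt hlam).eventually_ge_atTop 4)
  refine tendsto_of_tendsto_of_tendsto_of_le_of_le' hlo hhi ?_ ?_
  · filter_upwards [hev] with n hn
    obtain ⟨hn, h4⟩ := hn
    have hb := (hbd n hn).1
    have hn' : (0:ℝ) < n := by positivity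
    rw [le_div_iff₀ hn', sub_mul, div_mul_cancel₀ _ hn'.ne', mul_comm, ← Real.log_pow,
      ← Real.log_div (by positivity) (by norm_num)]
    exact Real.log_le_log (by positivity) (by linarith)
  · filter_upwards [hev] with n hn
    obtain ⟨hn, h4⟩ := hn
    obtain ⟨hb, hb2⟩ := hbd n hn
    have hn' : (0:ℝ) < n := by positivity
    rw [div_le_iff₀ hn', add_mul, div_mul_cancel₀ _ hn'.ne', mul_comm (Real.log lam),
      ← Real.log_pow, add_comm, ← Real.log_mul (by norm_num) (by positivity)]
    exact Real.log_le_log (by linarith) hb2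
end

section
/- The topological entropy of g_A equals log λ, that is, h(g_A) = log λ. -/
open Matrix

open Filter Set

/-- `E` is `(n,δ)`-separated for `g`. -/
def IsSeparatedSet {Y : Type*} [MetricSpace Y] (g : Y → Y) (n : ℕ) (δ : ℝ)
    (E : Set Y) : Prop :=
  ∀ x ∈ E, ∀ y ∈ E, x ≠ y → ∃ k < n, δ < dist (g^[k] x) (g^[k] y)

/-- `s_n(δ)`: the maximal cardinality of an `(n,δ)`-separated set for `g`. -/
noncomputable def sepMax {Y : Type*} [MetricSpace Y] (g : Y → Y) (n : ℕ) (δ : ℝ) : ℕ :=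
  sSup {k : ℕ | ∃ E : Finset Y, IsSeparatedSet g n δ ↑E ∧ E.card = k}


theorem aux_compact {S2 : Type} [MetricSpace S2] (π : Torus → S2) (hπcont : Continuous π)
    (hπ : ∀ x y : Torus, π x = π y ↔ (x = y ∨ x = -y)) (ε : ℝ) (hε : 0 < ε) :
    ∃ δ > 0, ∀ x y : Torus, dist (π x) (π y) ≤ δ → dist x y < ε ∨ dist x (-y) < ε := by
  let K : Set (Torus × Torus) := {p | ε ≤ dist p.1 p.2 ∧ ε ≤ dist p.1 (-p.2)}
  have hK : IsCompact K := by
    apply IsClosed.isCompact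
    have c1 : Continuous fun p : Torus × Torus => dist p.1 p.2 := by fun_prop
    have c2 : Continuous fun p : Torus × Torus => dist p.1 (-p.2) := by fun_prop
    exact (isClosed_le continuous_const c1).inter (isClosed_le continuous_const c2)
  rcases K.eq_empty_or_nonempty with h | h
  · refine ⟨1, one_pos, fun x y _ => ?_⟩
    by_contra hh
    push Not at hh
    have : (x, y) ∈ K := hh
    simp [h] at this
  · obtain ⟨p, hp, hmin⟩ := hK.exists_isMinOn h
      (f := fun p : Torus × Torus => dist (π p.1) (π p.2)) (by fun_prop)
    have hpos : 0 < dist (π p.1) (π p.2) := by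
      rw [dist_pos]
      intro he
      rcases (hπ _ _).1 he with h1 | h1
      · have := hp.1
        rw [h1, dist_self] at this
        linarith
      · have := hp.2
        rw [h1, dist_self] at this
        linarith
    refine ⟨dist (π p.1) (π p.2) / 2, by positivity, fun x y hxy => ?_⟩
    by_contra hh
    push Not at hh
    have hm : (x, y) ∈ K := hh
    have := hmin hm
    change dist (π p.1) (π p.2) ≤ dist (π x) (π y) at this
    linarith

theorem aux_iter (f : Torus → Torus) (hf : Continuous f) (m : ℕ) (ε : ℝ) (hε : 0 < ε) :
    ∃ η > 0, ∀ x y : Torus, dist x y < η → ∀ j < m, dist (f^[j] x) (f^[j] y) < ε := by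
  induction m with
  | zero => exact ⟨1, one_pos, fun _ _ _ j hj => by omega⟩
  | succ m ih =>
    obtain ⟨η, hη, h⟩ := ih
    have hu := CompactSpace.uniformContinuous_of_continuous (hf.iterate m)
    obtain ⟨η', hη', h'⟩ := Metric.uniformContinuous_iff.1 hu ε hε
    refine ⟨min η η', lt_min hη hη', fun x y hxy j hj => ?_⟩
    rcases Nat.lt_succ_iff_lt_or_eq.1 hj with hj | rfl
    · exact h x y (lt_of_lt_of_le hxy (min_le_left _ _)) j hj
    · exact h' (lt_of_lt_of_le hxy (min_le_right _ _))

theorem aux_surj (x : Torus) : ∃ v : ℝ × ℝ, torusMk v = x ∧ |v.1| ≤ 1 ∧ |v.2| ≤ 1 := by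
  have key : ∀ a : AddCircle (1:ℝ), ∃ r : ℝ, (r : AddCircle (1:ℝ)) = a ∧ |r| ≤ 1 := by
    intro a
    induction a using QuotientAddGroup.induction_on with
    | H r =>
      refine ⟨Int.fract r, ?_, ?_⟩
      · have : (r : AddCircle (1:ℝ)) = ((Int.fract r + ⌊r⌋ : ℝ) : AddCircle (1:ℝ)) := by
          rw [Int.fract_add_floor]
        refine Eq.trans ?_ this.symm
        rw [AddCircle.coe_add]
        have h2 : ((⌊r⌋ : ℝ) : AddCircle (1:ℝ)) = 0 := by
          rw [AddCircle.coe_eq_zero_iff]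
          exact ⟨⌊r⌋, by simp⟩
        rw [h2, add_zero]
      · rw [abs_of_nonneg (Int.fract_nonneg r)]
        exact (Int.fract_lt_one r).le
  obtain ⟨a, ha, ha'⟩ := key x.1
  obtain ⟨b, hb, hb'⟩ := key x.2
  exact ⟨(a, b), Prod.ext ha hb, ha', hb'⟩

theorem aux_norm_le (a : ℝ) : ‖(a : AddCircle (1:ℝ))‖ ≤ |a| := by
  exact QuotientAddGroup.norm_mk_le_norm

theorem aux_norm_eq (a : ℝ) (h : |a| ≤ 1/2) : ‖(a : AddCircle (1:ℝ))‖ = |a| := by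
  exact (AddCircle.norm_coe_eq_abs_iff (1:ℝ) one_ne_zero).2 (by simpa using h)

theorem aux_dist_le (v w : ℝ × ℝ) (r : ℝ) (h1 : |v.1 - w.1| ≤ r) (h2 : |v.2 - w.2| ≤ r) :
    dist (torusMk v) (torusMk w) ≤ r := by
  rw [Prod.dist_eq]
  apply max_le
  · rw [dist_eq_norm]
    exact (aux_norm_le (v.1 - w.1)).trans h1
  · rw [dist_eq_norm]
    exact (aux_norm_le (v.2 - w.2)).trans h2

theorem aux_arith (A : Matrix.SpecialLinearGroup (Fin 2) ℤ)
    (lam : ℝ) (hlam : 1 < lam)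
    (htr : ((A.1 0 0 : ℤ) : ℝ) + ((A.1 1 1 : ℤ) : ℝ) = lam + lam⁻¹) :
    ((A.1 0 0 : ℤ) : ℝ) * (A.1 1 1 : ℤ) - (A.1 0 1 : ℤ) * (A.1 1 0 : ℤ) = 1 ∧
    ((A.1 0 1 : ℤ) : ℝ) ≠ 0 ∧ ((A.1 1 0 : ℤ) : ℝ) ≠ 0 := by
  have hd : A.1 0 0 * A.1 1 1 - A.1 0 1 * A.1 1 0 = 1 := by
    have := A.2
    rwa [Matrix.det_fin_two] at this
  have h2 : (2:ℝ) < lam + lam⁻¹ := by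
    have h0 : 0 < lam := by linarith
    have : lam + lam⁻¹ - 2 = (lam - 1)^2 / lam := by field_simp; ring
    have : 0 < (lam - 1)^2 / lam := div_pos (pow_pos (by linarith) 2) h0
    linarith
  have key : A.1 0 1 * A.1 1 0 ≠ 0 := by
    intro h0
    rw [h0, sub_zero] at hd
    rcases Int.mul_eq_one_iff_eq_one_or_neg_one.1 hd with ⟨h, h'⟩ | ⟨h, h'⟩
    · rw [h, h'] at htr
      norm_num at htr
      linarith
    · rw [h, h'] at htr
      norm_num at htr
      linarith
  refine ⟨by exact_mod_cast hd, ?_, ?_⟩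
  · exact_mod_cast left_ne_zero_of_mul key
  · exact_mod_cast right_ne_zero_of_mul key

theorem aux_func (A : Matrix.SpecialLinearGroup (Fin 2) ℤ)
    (lam : ℝ) (hlam : 1 < lam)
    (htr : ((A.1 0 0 : ℤ) : ℝ) + ((A.1 1 1 : ℤ) : ℝ) = lam + lam⁻¹) :
    ∃ (p q : ℝ × ℝ → ℝ) (B C : ℝ), 0 < B ∧ 0 < C ∧
      (∀ v, p (matAct A v) = lam * p v) ∧ (∀ v, q (matAct A v) = lam⁻¹ * q v) ∧
      (∀ v, |v.1| ≤ 1 → |v.2| ≤ 1 → |p v| ≤ B ∧ |q v| ≤ B) ∧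
      (∀ v w r, |p v - p w| ≤ r → |q v - q w| ≤ r →
        |v.1 - w.1| ≤ C * r ∧ |v.2 - w.2| ≤ C * r) := by
  obtain ⟨hd, hb, hc⟩ := aux_arith A lam hlam htr
  have h0 : 0 < lam := by linarith
  have hmu : lam⁻¹ < 1 := inv_lt_one_of_one_lt₀ hlam
  have hm : lam * lam⁻¹ = 1 := mul_inv_cancel₀ h0.ne'
  unfold matAct
  generalize ((A.1 0 0 : ℤ) : ℝ) = a at *
  generalize ((A.1 0 1 : ℤ) : ℝ) = b at *
  generalize ((A.1 1 0 : ℤ) : ℝ) = c at *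
  generalize ((A.1 1 1 : ℤ) : ℝ) = d at *
  generalize lam⁻¹ = mu at *
  have hD : 0 < lam - mu := by linarith
  have hcp : 0 < |c| := abs_pos.2 hc
  obtain rfl : d = lam + mu - a := by linarith
  have bd : ∀ s : ℝ, ∀ v : ℝ × ℝ, |v.1| ≤ 1 → |v.2| ≤ 1 →
      |c * v.1 + (s - a) * v.2| ≤ |c| + |s - a| := by
    intro s v h1 h2
    refine (abs_add_le _ _).trans ?_
    rw [abs_mul, abs_mul]
    have := mul_le_mul_of_nonneg_left h1 (abs_nonneg c)
    have := mul_le_mul_of_nonneg_left h2 (abs_nonneg (s - a))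
    linarith
  refine ⟨fun v => c * v.1 + (lam - a) * v.2, fun v => c * v.1 + (mu - a) * v.2,
    |c| + |lam - a| + |mu - a|, 2 / (lam - mu) + (1 + |lam - a| * (2 / (lam - mu))) / |c|,
    by positivity, by positivity, ?_, ?_, ?_, ?_⟩
  · intro v
    simp only
    linear_combination (-v.2) * hd + v.2 * hm
  · intro v
    simp only
    linear_combination (-v.2) * hd + v.2 * hm
  · intro v h1 h2
    have := bd lam v h1 h2
    have := bd mu v h1 h2
    have := abs_nonneg (lam - a)
    have := abs_nonneg (mu - a)
    constructor <;> linarith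
  · intro v w r h1 h2
    have hr : 0 ≤ r := (abs_nonneg _).trans h1
    have e2 : |v.2 - w.2| ≤ 2 / (lam - mu) * r := by
      rw [div_mul_eq_mul_div, le_div_iff₀ hD, ← abs_of_pos hD, ← abs_mul]
      have : (v.2 - w.2) * (lam - mu) =
        (c * v.1 + (lam - a) * v.2 - (c * w.1 + (lam - a) * w.2)) -
        (c * v.1 + (mu - a) * v.2 - (c * w.1 + (mu - a) * w.2)) := by ring
      rw [this]
      refine (abs_sub _ _).trans ?_
      linarith
    have e1 : |v.1 - w.1| ≤ (1 + |lam - a| * (2 / (lam - mu))) / |c| * r := by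
      rw [div_mul_eq_mul_div, le_div_iff₀ hcp, ← abs_mul]
      have : (v.1 - w.1) * c =
        (c * v.1 + (lam - a) * v.2 - (c * w.1 + (lam - a) * w.2)) -
        (lam - a) * (v.2 - w.2) := by ring
      rw [this]
      refine (abs_sub _ _).trans ?_
      rw [abs_mul]
      have := mul_le_mul_of_nonneg_left e2 (abs_nonneg (lam - a))
      linarith
    have p1 : 0 ≤ 2 / (lam - mu) * r := by positivity
    have p2 : 0 ≤ (1 + |lam - a| * (2 / (lam - mu))) / |c| * r := by positivity
    constructor <;> linarith

theorem aux_vec (A : Matrix.SpecialLinearGroup (Fin 2) ℤ)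
    (lam : ℝ) (hlam : 1 < lam)
    (htr : ((A.1 0 0 : ℤ) : ℝ) + ((A.1 1 1 : ℤ) : ℝ) = lam + lam⁻¹) :
    ∃ u : ℝ × ℝ, max |u.1| |u.2| = 1 ∧ ∀ t : ℝ, matAct A (t • u) = (lam * t) • u := by
  obtain ⟨hd, hb, hc⟩ := aux_arith A lam hlam htr
  have h0 : 0 < lam := by linarith
  have hm : lam * lam⁻¹ = 1 := mul_inv_cancel₀ h0.ne'
  unfold matAct
  generalize ((A.1 0 0 : ℤ) : ℝ) = a at *
  generalize ((A.1 0 1 : ℤ) : ℝ) = b at *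
  generalize ((A.1 1 0 : ℤ) : ℝ) = c at *
  generalize ((A.1 1 1 : ℤ) : ℝ) = d at *
  generalize lam⁻¹ = mu at *
  obtain rfl : d = lam + mu - a := by linarith
  have hM : 0 < max |b| |lam - a| := lt_max_of_lt_left (abs_pos.2 hb)
  refine ⟨(b / max |b| |lam - a|, (lam - a) / max |b| |lam - a|), ?_, ?_⟩
  · simp only
    rw [abs_div, abs_div, abs_of_pos hM, max_div_div_right hM.le, div_self hM.ne']
  · intro t
    generalize max |b| |lam - a| = M at *
    ext
    · simp
      field_simp
      ring
    · simp
      field_simp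
      linear_combination (-t) * hd + t * hm

theorem aux_semi (A : Matrix.SpecialLinearGroup (Fin 2) ℤ) (fA : Torus ≃ₜ Torus)
    (hfA : ∀ v : ℝ × ℝ, fA (torusMk v) = torusMk (matAct A v)) (k : ℕ) (v : ℝ × ℝ) :
    fA^[k] (torusMk v) = torusMk ((matAct A)^[k] v) := by
  induction k generalizing v with
  | zero => rfl
  | succ k ih => rw [Function.iterate_succ_apply, Function.iterate_succ_apply, hfA, ih]

theorem aux_neg (A : Matrix.SpecialLinearGroup (Fin 2) ℤ) (fA : Torus ≃ₜ Torus)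
    (hfA : ∀ v : ℝ × ℝ, fA (torusMk v) = torusMk (matAct A v)) (k : ℕ) (x : Torus) :
    fA^[k] (-x) = - fA^[k] x := by
  have h1 : ∀ x, fA (-x) = - fA x := by
    intro x
    obtain ⟨v, rfl, -⟩ := aux_surj x
    have hn : ∀ v, torusMk (-v) = - torusMk v := fun v => rfl
    have : matAct A (-v) = - matAct A v := by
      unfold matAct
      ext <;> simp <;> ring
    rw [← hn, hfA, hfA, this, hn]
  induction k generalizing x with
  | zero => rfl
  | succ k ih => rw [Function.iterate_succ_apply, Function.iterate_succ_apply, h1, ih]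

theorem aux_semi2 {S2 : Type} (fA : Torus → Torus) (gA : S2 → S2) (π : Torus → S2)
    (hgA : ∀ x : Torus, gA (π x) = π (fA x)) (k : ℕ) (x : Torus) :
    gA^[k] (π x) = π (fA^[k] x) := by
  induction k generalizing x with
  | zero => rfl
  | succ k ih => rw [Function.iterate_succ_apply, Function.iterate_succ_apply, hgA, ih]

theorem aux_upper
    (A : Matrix.SpecialLinearGroup (Fin 2) ℤ)
    (lam : ℝ) (hlam : 1 < lam)
    (htr : ((A.1 0 0 : ℤ) : ℝ) + ((A.1 1 1 : ℤ) : ℝ) = lam + lam⁻¹)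
    (fA : Torus ≃ₜ Torus)
    (hfA : ∀ v : ℝ × ℝ, fA (torusMk v) = torusMk (matAct A v))
    (S2 : Type) [MetricSpace S2]
    (π : Torus → S2) (hπcont : Continuous π) (hπsurj : Function.Surjective π)
    (gA : S2 ≃ₜ S2) (hgA : ∀ x : Torus, gA (π x) = π (fA x)) (δ : ℝ) (hδ : 0 < δ) :
    ∃ K : ℝ, 1 ≤ K ∧ ∀ (n : ℕ) (E : Finset S2), IsSeparatedSet gA n δ ↑E →
      (E.card : ℝ) ≤ K * lam ^ n := by
  have h0 : 0 < lam := by linarith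
  have hu := CompactSpace.uniformContinuous_of_continuous hπcont
  obtain ⟨ε, hε, hεδ⟩ := Metric.uniformContinuous_iff.1 hu δ hδ
  obtain ⟨p, q, B, C, hB, hC, hp, hq, hbd, hpq⟩ := aux_func A lam hlam htr
  have hpk : ∀ k v, p ((matAct A)^[k] v) = lam ^ k * p v := by
    intro k
    induction k with
    | zero => simp
    | succ k ih => intro v; rw [Function.iterate_succ_apply, ih, hp]; ring
  have hqk : ∀ k v, q ((matAct A)^[k] v) = lam⁻¹ ^ k * q v := by
    intro k
    induction k with
    | zero => simp
    | succ k ih => intro v; rw [Function.iterate_succ_apply, ih, hq]; ring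
  have hlift : ∀ y : S2, ∃ v : ℝ × ℝ, π (torusMk v) = y ∧ |v.1| ≤ 1 ∧ |v.2| ≤ 1 := by
    intro y
    obtain ⟨x, rfl⟩ := hπsurj y
    obtain ⟨v, rfl, h⟩ := aux_surj x
    exact ⟨v, rfl, h⟩
  choose v hv hv1 hv2 using hlift
  obtain ⟨c, hc, hcC⟩ : ∃ c : ℝ, 0 < c ∧ C * c < ε :=
    ⟨ε / (2 * C), by positivity, by field_simp; linarith⟩
  refine ⟨(2 * (B / c) + 3) * (2 * (B / c) + 3), ?_, ?_⟩
  · have : 0 < B / c := by positivity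
    nlinarith
  intro n E hE
  have hLn : 1 ≤ lam ^ n := one_le_pow₀ hlam.le
  let φ : S2 → ℤ × ℤ := fun y => (⌊p (v y) * lam ^ n / c⌋, ⌊q (v y) / c⌋)
  have fl : ∀ (x R : ℝ), |x| ≤ R → ⌊x⌋ ∈ Finset.Icc (-(⌈R⌉₊ : ℤ)) ⌈R⌉₊ := by
    intro x R hx
    have := Nat.le_ceil R
    have hx' := abs_le.1 hx
    rw [Finset.mem_Icc]
    constructor
    · rw [Int.le_floor]
      push_cast
      linarith
    · have h1 := Int.floor_le x
      have : (⌊x⌋ : ℝ) ≤ (⌈R⌉₊ : ℝ) := by linarith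
      exact_mod_cast this
  have cd : ∀ R : ℝ, 0 ≤ R → ((Finset.Icc (-(⌈R⌉₊ : ℤ)) ⌈R⌉₊).card : ℝ) ≤ 2 * R + 3 := by
    intro R hR
    have h1 := Nat.ceil_lt_add_one hR
    have : (Finset.Icc (-(⌈R⌉₊ : ℤ)) ⌈R⌉₊).card = 2 * ⌈R⌉₊ + 1 := by
      rw [Int.card_Icc]; omega
    rw [this]
    push_cast
    linarith
  have hcard := Finset.card_le_card_of_injOn (s := E)
    (t := Finset.Icc (-(⌈B * lam ^ n / c⌉₊ : ℤ)) ⌈B * lam ^ n / c⌉₊ ×ˢ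
      Finset.Icc (-(⌈B / c⌉₊ : ℤ)) ⌈B / c⌉₊) φ (by
        intro y _
        obtain ⟨h1, h2⟩ := hbd (v y) (hv1 y) (hv2 y)
        simp only [Finset.coe_product, mem_prod, Finset.mem_coe]
        constructor
        · apply fl
          rw [abs_div, abs_mul, abs_of_pos hc, abs_of_pos (by positivity : 0 < lam ^ n)]
          gcongr
        · apply fl
          rw [abs_div, abs_of_pos hc]
          gcongr) (by
        intro y hy z hz hyz
        by_contra hne
        obtain ⟨k, hk, hlt⟩ := hE y hy z hz hne
        simp only [φ, Prod.mk.injEq] at hyz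
        have e1 := Int.abs_sub_lt_one_of_floor_eq_floor hyz.1
        have e2 := Int.abs_sub_lt_one_of_floor_eq_floor hyz.2
        rw [← sub_div, abs_div, abs_of_pos hc, div_lt_one hc] at e1 e2
        rw [← sub_mul, abs_mul, abs_of_pos (by positivity : 0 < lam ^ n)] at e1
        have e1' : |p ((matAct A)^[k] (v y)) - p ((matAct A)^[k] (v z))| ≤ c := by
          rw [hpk, hpk, ← mul_sub, abs_mul, abs_of_pos (by positivity : 0 < lam ^ k)]
          have : lam ^ k ≤ lam ^ n := pow_le_pow_right₀ hlam.le hk.le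
          have := mul_le_mul_of_nonneg_right this (abs_nonneg (p (v y) - p (v z)))
          linarith
        have e2' : |q ((matAct A)^[k] (v y)) - q ((matAct A)^[k] (v z))| ≤ c := by
          rw [hqk, hqk, ← mul_sub, abs_mul, abs_of_pos (by positivity : 0 < lam⁻¹ ^ k)]
          have : lam⁻¹ ^ k ≤ 1 := pow_le_one₀ (by positivity) (inv_le_one_of_one_le₀ hlam.le)
          have := mul_le_mul_of_nonneg_right this (abs_nonneg (q (v y) - q (v z)))
          linarith
        obtain ⟨r1, r2⟩ := hpq _ _ _ e1' e2'
        have r3 := aux_dist_le _ _ _ r1 r2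
        have r4 := hεδ (lt_of_le_of_lt r3 hcC)
        rw [← hv y, ← hv z, aux_semi2 fA gA π hgA, aux_semi2 fA gA π hgA,
          aux_semi A fA hfA, aux_semi A fA hfA] at hlt
        linarith)
  have hcard' : (E.card : ℝ) ≤ _ := Nat.cast_le.2 hcard
  rw [Finset.card_product, Nat.cast_mul] at hcard'
  have c1 := cd (B * lam ^ n / c) (by positivity)
  have c2 := cd (B / c) (by positivity)
  have c3 : 2 * (B * lam ^ n / c) + 3 ≤ (2 * (B / c) + 3) * lam ^ n := by
    have : B * lam ^ n / c = B / c * lam ^ n := by ring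
    rw [this]
    nlinarith
  have hbc : 0 < B / c := by positivity
  calc (E.card : ℝ) ≤ _ := hcard'
    _ ≤ ((2 * (B / c) + 3) * lam ^ n) * (2 * (B / c) + 3) := by
        apply mul_le_mul (c1.trans c3) c2 (by positivity) (by positivity)
    _ = _ := by ring

theorem aux_le_sepMax {Y : Type} [MetricSpace Y] (g : Y → Y) (n : ℕ) (δ : ℝ) (K : ℝ)
    (hK : ∀ E : Finset Y, IsSeparatedSet g n δ ↑E → (E.card : ℝ) ≤ K) :
    BddAbove {k : ℕ | ∃ E : Finset Y, IsSeparatedSet g n δ ↑E ∧ E.card = k} ∧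
    ∃ E : Finset Y, IsSeparatedSet g n δ ↑E ∧ E.card = sepMax g n δ := by
  have hb : BddAbove {k : ℕ | ∃ E : Finset Y, IsSeparatedSet g n δ ↑E ∧ E.card = k} := by
    refine ⟨⌊K⌋₊, ?_⟩
    rintro k ⟨E, hE, rfl⟩
    exact Nat.le_floor (hK E hE)
  exact ⟨hb, Nat.sSup_mem (s := {k : ℕ | ∃ E : Finset Y, IsSeparatedSet g n δ ↑E ∧ E.card = k})
    ⟨0, ∅, by simp [IsSeparatedSet], rfl⟩ hb⟩

theorem aux_span {Y : Type} [MetricSpace Y] (g : Y → Y) (n : ℕ) (δ : ℝ) (hδ : 0 < δ) (K : ℝ)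
    (hK : ∀ E : Finset Y, IsSeparatedSet g n δ ↑E → (E.card : ℝ) ≤ K) :
    ∃ F : Finset Y, F.card = sepMax g n δ ∧
      ∀ x, ∃ y ∈ F, ∀ k < n, dist (g^[k] x) (g^[k] y) ≤ δ := by
  classical
  obtain ⟨hb, F, hF, hc⟩ := aux_le_sepMax g n δ K hK
  refine ⟨F, hc, fun x => ?_⟩
  by_contra hx
  push Not at hx
  have hxF : x ∉ F := by
    intro h
    obtain ⟨k, _, hk⟩ := hx x h
    rw [dist_self] at hk
    linarith
  have : IsSeparatedSet g n δ ↑(insert x F) := by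
    intro a ha b hb hab
    rw [Finset.coe_insert] at ha hb
    rcases ha with rfl | ha <;> rcases hb with rfl | hb
    · exact absurd rfl hab
    · exact hx b hb
    · obtain ⟨k, hk, h⟩ := hx a ha
      exact ⟨k, hk, by rwa [dist_comm]⟩
    · exact hF a ha b hb hab
  have h2 : (insert x F).card ≤ sepMax g n δ := le_csSup hb ⟨_, this, rfl⟩
  rw [Finset.card_insert_of_notMem hxF] at h2
  omega

theorem aux_lower
    (A : Matrix.SpecialLinearGroup (Fin 2) ℤ)
    (lam : ℝ) (hlam : 1 < lam)
    (htr : ((A.1 0 0 : ℤ) : ℝ) + ((A.1 1 1 : ℤ) : ℝ) = lam + lam⁻¹)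
    (fA : Torus ≃ₜ Torus)
    (hfA : ∀ v : ℝ × ℝ, fA (torusMk v) = torusMk (matAct A v))
    (S2 : Type) [MetricSpace S2]
    (π : Torus → S2) (hπcont : Continuous π) (hπsurj : Function.Surjective π)
    (hπ : ∀ x y : Torus, π x = π y ↔ (x = y ∨ x = -y))
    (gA : S2 ≃ₜ S2) (hgA : ∀ x : Torus, gA (π x) = π (fA x)) (m : ℕ) (hm : 0 < m) :
    ∃ δ₀ > 0, ∀ δ, 0 < δ → δ ≤ δ₀ → ∀ n, 0 < n →
      lam ^ n ≤ (sepMax gA n δ : ℝ) * 2 ^ (n / m + 1) := by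
  have h0 : 0 < lam := by linarith
  obtain ⟨u, hu, hAu⟩ := aux_vec A lam hlam htr
  have hAk : ∀ k t, (matAct A)^[k] (t • u) = (lam ^ k * t) • u := by
    intro k
    induction k with
    | zero => simp
    | succ k ih => intro t; rw [Function.iterate_succ_apply, hAu, ih]; ring_nf
  set ε : ℝ := 1 / (8 * lam) with hεd
  have hε : 0 < ε := by positivity
  have hεl : 2 * ε * lam ≤ 1 / 2 := by rw [hεd]; field_simp; norm_num
  obtain ⟨η, hη, hηf⟩ := aux_iter fA fA.continuous m ε hε
  obtain ⟨δ₀, hδ₀, hδπ⟩ := aux_compact π hπcont hπ η hη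
  refine ⟨δ₀, hδ₀, fun δ hδ hδδ n hn => ?_⟩
  obtain ⟨K, -, hK⟩ := aux_upper A lam hlam htr fA hfA S2 π hπcont hπsurj gA hgA δ hδ
  obtain ⟨F, hFc, hF⟩ := aux_span gA n δ hδ _ (hK n)
  -- distance along the unstable line
  have hdist : ∀ s t : ℝ, |s - t| ≤ 1 / 2 →
      dist (torusMk (s • u)) (torusMk (t • u)) = |s - t| := by
    intro s t hst
    have a1 : |u.1| ≤ 1 := hu ▸ le_max_left _ _
    have a2 : |u.2| ≤ 1 := hu ▸ le_max_right _ _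
    have key : ∀ w : ℝ, |w| ≤ 1 →
        dist ((s * w : ℝ) : AddCircle (1:ℝ)) ((t * w : ℝ) : AddCircle (1:ℝ)) = |s - t| * |w| := by
      intro w hw
      rw [dist_eq_norm, ← AddCircle.coe_sub, ← sub_mul, aux_norm_eq, abs_mul]
      rw [abs_mul]
      have := abs_nonneg (s - t)
      nlinarith
    rw [Prod.dist_eq]
    have k1 := key u.1 a1
    have k2 := key u.2 a2
    simp only [torusMk, Prod.smul_fst, Prod.smul_snd, smul_eq_mul]
    rw [k1, k2, ← mul_max_of_nonneg _ _ (abs_nonneg _), hu, mul_one]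
  choose ls hls using hπsurj
  choose y hyF hy using hF
  let x : ℕ → Torus := fun j => torusMk ((j * (lam ^ n)⁻¹ / 2 : ℝ) • u)
  have hsgn : ∀ j i : ℕ, ∃ b : Bool, ∀ k < n, k / m = i →
      dist (fA^[k] (x j)) (if b then fA^[k] (ls (y (π (x j)))) else - fA^[k] (ls (y (π (x j))))) < ε := by
    intro j i
    by_cases hi : i * m < n
    · have h1 := hy (π (x j)) (i * m) hi
      rw [← hls (y (π (x j))), aux_semi2 fA gA π hgA, aux_semi2 fA gA π hgA] at h1
      have kk : ∀ k, k / m = i → ∃ r < m, k = r + i * m := by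
        intro k hk
        refine ⟨k % m, Nat.mod_lt _ hm, ?_⟩
        rw [← hk, mul_comm]
        exact (Nat.mod_add_div k m).symm
      rcases hδπ _ _ (h1.trans hδδ) with h | h
      · refine ⟨true, fun k hk hki => ?_⟩
        obtain ⟨r, hr, rfl⟩ := kk k hki
        have := hηf _ _ h r hr
        simpa [Function.iterate_add_apply] using this
      · refine ⟨false, fun k hk hki => ?_⟩
        obtain ⟨r, hr, rfl⟩ := kk k hki
        have := hηf _ _ h r hr
        rw [aux_neg A fA hfA] at this
        simpa [Function.iterate_add_apply] using this
    · refine ⟨true, fun k hk hki => ?_⟩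
      exfalso
      apply hi
      rw [← hki]
      exact lt_of_le_of_lt (Nat.div_mul_le_self k m) hk
  choose b hb using hsgn
  have hcard := Finset.card_le_card_of_injOn (s := Finset.range (⌊lam ^ n⌋₊ + 1))
    (t := F ×ˢ (Finset.univ : Finset (Fin (n / m + 1) → Bool)))
    (fun j => (y (π (x j)), fun i => b j i)) (by
      intro j _
      simp [hyF]) (by
      intro j hj l hl hjl
      simp only [Prod.mk.injEq] at hjl
      obtain ⟨e1, e2⟩ := hjl
      by_contra hne
      have hclose : ∀ k < n, dist (fA^[k] (x j)) (fA^[k] (x l)) ≤ 2 * ε := by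
        intro k hk
        have i1 := hb j (k / m) k hk rfl
        have i2 := hb l (k / m) k hk rfl
        have e3 : b j (k / m) = b l (k / m) :=
          congrFun e2 ⟨k / m, Nat.lt_succ_of_le (Nat.div_le_div_right hk.le)⟩
        rw [e1, e3] at i1
        have := dist_triangle_right (fA^[k] (x j)) (fA^[k] (x l)) _ |>.trans (add_le_add i1.le i2.le)
        linarith
      have hjn : (j : ℝ) ≤ lam ^ n := by
        have : j ≤ ⌊lam ^ n⌋₊ := by simpa [Nat.lt_succ_iff] using hj
        exact (Nat.le_floor_iff (by positivity)).1 this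
      have hln : (l : ℝ) ≤ lam ^ n := by
        have : l ≤ ⌊lam ^ n⌋₊ := by simpa [Nat.lt_succ_iff] using hl
        exact (Nat.le_floor_iff (by positivity)).1 this
      set D : ℝ := (j * (lam ^ n)⁻¹ / 2 : ℝ) - (l * (lam ^ n)⁻¹ / 2 : ℝ) with hD
      have hDe : |D| = |(j : ℝ) - l| * ((lam ^ n)⁻¹ / 2) := by
        have hDD : D = ((j : ℝ) - l) * ((lam ^ n)⁻¹ / 2) := by rw [hD]; ring
        rw [hDD, abs_mul, abs_of_pos (by positivity : 0 < (lam ^ n)⁻¹ / 2)]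
      have hD1 : |D| ≤ 1 / 2 := by
        rw [hDe]
        have : |(j : ℝ) - l| ≤ lam ^ n := by
          have : (0:ℝ) ≤ j := by positivity
          have : (0:ℝ) ≤ l := by positivity
          rw [abs_le]; constructor <;> linarith
        calc _ ≤ lam ^ n * ((lam ^ n)⁻¹ / 2) := by gcongr
          _ = 1 / 2 := by field_simp
      have hstep : ∀ k < n, lam ^ k * |D| ≤ 1 / 2 → lam ^ k * |D| ≤ 2 * ε := by
        intro k hk hle
        have := hclose k hk
        simp only [x] at this
        rw [aux_semi A fA hfA, aux_semi A fA hfA, hAk, hAk, hdist] at this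
        · rw [← mul_sub, abs_mul, abs_of_pos (by positivity : 0 < lam ^ k)] at this
          exact this
        · rw [← mul_sub, abs_mul, abs_of_pos (by positivity : 0 < lam ^ k)]
          exact hle
      have hall : ∀ k < n, lam ^ k * |D| ≤ 2 * ε := by
        intro k
        induction k with
        | zero => intro hk; exact hstep 0 hk (by simpa using hD1)
        | succ k ih =>
          intro hk
          apply hstep _ hk
          have := ih (by omega)
          have := mul_le_mul_of_nonneg_right this h0.le
          rw [pow_succ]
          nlinarith
      have hfin := hall (n - 1) (by omega)
      have h1 : (1:ℝ) ≤ |(j : ℝ) - l| := by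
        have : (1:ℤ) ≤ |(j : ℤ) - l| := Int.one_le_abs (by omega)
        exact_mod_cast this
      have h2 : lam ^ n = lam ^ (n - 1) * lam := by
        rw [← pow_succ]; congr 1; omega
      rw [hDe, h2] at hfin
      have h3 : lam ^ (n - 1) * (|(j : ℝ) - l| * ((lam ^ (n - 1) * lam)⁻¹ / 2))
          = |(j : ℝ) - l| * (4 * ε) := by
        rw [hεd]; field_simp; norm_num
      rw [h3] at hfin
      nlinarith)
  rw [Finset.card_product, Finset.card_range, hFc] at hcard
  simp only [Finset.card_univ, Fintype.card_fun, Fintype.card_bool, Fintype.card_fin] at hcard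
  have hcard' : ((⌊lam ^ n⌋₊ + 1 : ℕ) : ℝ) ≤ _ := Nat.cast_le.2 hcard
  push_cast at hcard'
  exact (Nat.lt_floor_add_one _).le.trans hcard'

/-- the topological entropy of `g_A` (in Bowen's sense, via
separated sets) equals `log λ`. -/
theorem entropy_of_quotient
    (A : Matrix.SpecialLinearGroup (Fin 2) ℤ)
    (lam : ℝ) (hlam : 1 < lam)
    (htr : ((A.1 0 0 : ℤ) : ℝ) + ((A.1 1 1 : ℤ) : ℝ) = lam + lam⁻¹)
    (fA : Torus ≃ₜ Torus)
    (hfA : ∀ v : ℝ × ℝ, fA (torusMk v) = torusMk (matAct A v))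
    (S2 : Type) [MetricSpace S2] [CompactSpace S2]
    (π : Torus → S2) (hπcont : Continuous π) (hπsurj : Function.Surjective π)
    (hπ : ∀ x y : Torus, π x = π y ↔ (x = y ∨ x = -y))
    (gA : S2 ≃ₜ S2) (hgA : ∀ x : Torus, gA (π x) = π (fA x)) :
    Tendsto
      (fun δ : ℝ =>
        Filter.limsup (fun n : ℕ => Real.log (sepMax gA n δ) / n) atTop)
      (nhdsWithin 0 (Set.Ioi 0)) (nhds (Real.log lam)) := by
  have h0 : 0 < lam := by linarith
  have hup : ∀ δ > 0, ∃ C : ℝ, ∀ n : ℕ, 0 < n →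
      Real.log (sepMax gA n δ) / n ≤ C / n + Real.log lam := by
    intro δ hδ
    obtain ⟨K, hK1, hK⟩ := aux_upper A lam hlam htr fA hfA S2 π hπcont hπsurj gA hgA δ hδ
    refine ⟨Real.log K, fun n hn => ?_⟩
    obtain ⟨-, E, hE, hEc⟩ := aux_le_sepMax gA n δ _ (hK n)
    have hn' : (0:ℝ) < n := by exact_mod_cast hn
    have h1 := hK n E hE
    rw [hEc] at h1
    have h2 : Real.log (sepMax gA n δ) ≤ Real.log K + n * Real.log lam := by
      rcases Nat.eq_zero_or_pos (sepMax gA n δ) with h | h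
      · rw [h]
        have := Real.log_nonneg hK1
        have := Real.log_nonneg hlam.le
        simp
        positivity
      · rw [← Real.log_pow, ← Real.log_mul (by positivity) (by positivity)]
        exact Real.log_le_log (by exact_mod_cast h) h1
    rw [div_le_iff₀ hn', add_mul, div_mul_cancel₀ _ hn'.ne']
    linarith
  have hlim : ∀ C a : ℝ, Tendsto (fun n : ℕ => C / (n : ℝ) + a) atTop (nhds a) := by
    intro C a
    simpa using (tendsto_const_div_atTop_nhds_zero_nat C).add_const a
  have hnn : ∀ δ, ∀ n : ℕ, 0 ≤ Real.log (sepMax gA n δ) / n := fun δ n =>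
    div_nonneg (Real.log_natCast_nonneg _) (Nat.cast_nonneg _)
  have hcob : ∀ δ, IsCoboundedUnder (· ≤ ·) atTop
      (fun n : ℕ => Real.log (sepMax gA n δ) / n) := fun δ =>
    (isBoundedUnder_of ⟨0, fun n => hnn δ n⟩ : IsBoundedUnder (· ≥ ·) atTop
      (fun n : ℕ => Real.log (sepMax gA n δ) / n)).isCoboundedUnder_le
  have hbdd : ∀ δ > 0, IsBoundedUnder (· ≤ ·) atTop
      (fun n : ℕ => Real.log (sepMax gA n δ) / n) := by
    intro δ hδ
    obtain ⟨C, hC⟩ := hup δ hδ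
    exact (hlim C (Real.log lam)).isBoundedUnder_le.mono_le
      ((eventually_gt_atTop 0).mono fun n hn => hC n hn)
  have hU : ∀ δ > 0, limsup (fun n : ℕ => Real.log (sepMax gA n δ) / n) atTop
      ≤ Real.log lam := by
    intro δ hδ
    obtain ⟨C, hC⟩ := hup δ hδ
    rw [← (hlim C (Real.log lam)).limsup_eq]
    exact limsup_le_limsup ((eventually_gt_atTop 0).mono fun n hn => hC n hn) (hcob δ)
      (hlim C (Real.log lam)).isBoundedUnder_le
  have hL : ∀ m : ℕ, 0 < m → ∃ δ₀ > 0, ∀ δ, 0 < δ → δ ≤ δ₀ →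
      Real.log lam - Real.log 2 / m ≤
        limsup (fun n : ℕ => Real.log (sepMax gA n δ) / n) atTop := by
    intro m hm
    obtain ⟨δ₀, hδ₀, h⟩ := aux_lower A lam hlam htr fA hfA S2 π hπcont hπsurj hπ gA hgA m hm
    refine ⟨δ₀, hδ₀, fun δ hδ hle => ?_⟩
    have hm' : (0:ℝ) < m := by exact_mod_cast hm
    rw [← (hlim (-Real.log 2) (Real.log lam - Real.log 2 / m)).limsup_eq]
    refine limsup_le_limsup ((eventually_gt_atTop 0).mono fun n hn => ?_)
      (hlim _ _).isCoboundedUnder_le (hbdd δ hδ)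
    have hn' : (0:ℝ) < n := by exact_mod_cast hn
    have h1 := h δ hδ hle n hn
    have hs : (sepMax gA n δ : ℝ) ≠ 0 := by
      intro h2
      rw [h2, zero_mul] at h1
      have : 0 < lam ^ n := by positivity
      linarith
    have h2 := Real.log_le_log (by positivity) h1
    rw [Real.log_mul hs (by positivity), Real.log_pow, Real.log_pow] at h2
    have h3 : ((n / m : ℕ) : ℝ) ≤ (n : ℝ) / m := Nat.cast_div_le
    have h4 : 0 < Real.log 2 := Real.log_pos (by norm_num)
    push_cast at h2
    have h5 := mul_le_mul_of_nonneg_right h3 h4.le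
    simp only
    rw [le_div_iff₀ hn', add_mul, div_mul_cancel₀ _ hn'.ne']
    have : (Real.log lam - Real.log 2 / m) * n = n * Real.log lam - (n : ℝ) / m * Real.log 2 := by
      ring
    rw [this]
    nlinarith
  rw [Metric.tendsto_nhdsWithin_nhds]
  intro e he
  obtain ⟨m, hm⟩ := exists_nat_gt (Real.log 2 / e)
  have h4 : 0 < Real.log 2 := Real.log_pos (by norm_num)
  have hm' : (0:ℝ) < m := lt_trans (by positivity) hm
  obtain ⟨δ₀, hδ₀, h⟩ := hL m (by exact_mod_cast hm')
  refine ⟨δ₀, hδ₀, fun {δ} hδ hd => ?_⟩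
  have hδ' : 0 < δ := hδ
  rw [Real.dist_eq, sub_zero, abs_of_pos hδ'] at hd
  have a1 := h δ hδ' hd.le
  have a2 := hU δ hδ'
  have a3 : Real.log 2 / m < e := by
    rw [div_lt_iff₀ hm']
    rw [div_lt_iff₀ he] at hm
    linarith
  rw [Real.dist_eq, abs_lt]
  constructor <;> linarith
end

section
/- Let f : X → X be an expansive homeomorphism of a compact metric space such that 2α is an expansive constant of f. Let n, r ≥ 1, let (y_j)_{j=0}^{n} be points of X with y_n = y_0, and define the periodic concatenation (z_j)_{j=0}^{nr} by z_{jn+i} = y_i for 0 ≤ i ≤ n and 0 ≤ j ≤ r−1. If q ∈ X satisfies f^{nr}(q) = q and d(f^j(q), z_j) < α for every 0 ≤ j ≤ nr, then f^n(q) = q. -/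
/-- The `t`-th iterate of `f`, for `t : ℤ`. -/
noncomputable def zIter {X : Type*} [TopologicalSpace X] (f : X ≃ₜ X) (t : ℤ) : X → X :=
  ⇑(f.toEquiv ^ t)

/-- for an expansive homeomorphism with expansive constant `2α`,
a periodic point of period `n·r` that `α`-shadows the `r`-fold periodic
concatenation of a closed pseudo-orbit of length `n` has period `n`. -/
theorem period_matches_pseudo_orbit_length
    {X : Type*} [MetricSpace X] [CompactSpace X] (f : X ≃ₜ X)
    (α : ℝ) (hα : 0 < α)
    (hexp : ∀ x y : X, (∀ t : ℤ, dist (zIter f t x) (zIter f t y) ≤ 2 * α) → x = y)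
    (n r : ℕ) (hn : 1 ≤ n) (hr : 1 ≤ r)
    (y : ℕ → X) (hy : y n = y 0)
    (q : X) (hq : f^[n*r] q = q)
    -- the periodic concatenation (z_j)_{j=0}^{nr}, z_{jn+i} = y_i, is α-shadowed by q
    (hshadow : ∀ i ≤ n, ∀ j < r, dist (f^[j*n+i] q) (y i) < α) :
    f^[n] q = q := by
  have hN : 0 < n * r := Nat.mul_pos hn hr
  have key : ∀ m : ℕ, dist (f^[m] q) (y (m % n)) < α := by
    intro m
    have h1 : f^[m % (n*r)] q = f^[m] q :=
      Function.IsPeriodicPt.iterate_mod_apply (f := f) (n := n*r) hq m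
    have h2 : m % (n*r) % n = m % n := Nat.mod_mul_right_mod m n r
    have h3 : m % (n*r) / n < r := Nat.div_lt_of_lt_mul (Nat.mod_lt _ hN)
    have h4 := hshadow (m % n) (Nat.mod_lt _ hn).le _ h3
    have h5 : m % (n*r) / n * n + m % n = m % (n*r) := by
      rw [← h2]; exact Nat.div_add_mod' _ _
    rwa [h5, h1] at h4
  have hnat : ∀ (m : ℕ) (x : X), (f.toEquiv ^ m) x = f^[m] x := by
    intro m x
    exact congrFun (Equiv.Perm.iterate_eq_pow f.toEquiv m).symm x
  have hz : ∀ (t : ℤ) (x : X), f^[n*r] x = x →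
      zIter f t x = f^[(t % ((n*r : ℕ) : ℤ)).toNat] x := by
    intro t x hx
    have h0 : 0 ≤ t % ((n*r : ℕ) : ℤ) := Int.emod_nonneg _ (by exact_mod_cast hN.ne')
    have hfix : ((f.toEquiv ^ (n*r)) ^ (t / ((n*r : ℕ) : ℤ))) x = x :=
      Equiv.Perm.zpow_apply_eq_self_of_apply_eq_self (by rw [hnat]; exact hx) _
    unfold zIter
    rw [← hnat, ← zpow_natCast, Int.toNat_of_nonneg h0]
    conv_lhs => rw [← Int.emod_add_mul_ediv t ((n*r : ℕ) : ℤ), zpow_add, zpow_mul, zpow_natCast]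
    rw [Equiv.Perm.mul_apply, hfix]
  apply hexp
  intro t
  have hq' : f^[n*r] (f^[n] q) = f^[n] q := by
    rw [← Function.iterate_add_apply, Nat.add_comm, Function.iterate_add_apply, hq]
  rw [hz t _ hq', hz t _ hq, ← Function.iterate_add_apply]
  generalize (t % ((n*r : ℕ) : ℤ)).toNat = m
  have a := key (m + n)
  have b := key m
  rw [Nat.add_mod_right] at a
  have c := dist_triangle_right (f^[m+n] q) (f^[m] q) (y (m % n))
  linarith
end
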